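/- arXiv:2108.12077 — 4 statements merged into one kernel-verified Lean document; each statement's English description precedes it below -/
import Mathlib

section
/- Let s > 1 and let u, v be harmonic functions in the exterior Ω of the unit sphere 𝕊 ⊂ ℝ³, continuous up to 𝕊, tending to 0 as |x| → ∞, and with boundary traces u|_𝕊, v|_𝕊 ∈ H^{s+1}_ax(𝕊). Then the product of latitudinal derivatives u_θ v_θ restricted to 𝕊 belongs to H^s_ax(𝕊) and ‖u_θ v_θ‖_{H^s(𝕊)} ≤ C ‖u‖_{H^{s+1}(𝕊)} ‖v‖_{H^{s+1}(𝕊)} for some constant C > 0 independent of u and v. -/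
noncomputable section

open MeasureTheory Real Filter

/-- The Legendre polynomial of degree `n`, via Rodrigues' formula. -/
def legendreP (n : ℕ) : Polynomial ℝ :=
  Polynomial.C ((2 ^ n * n.factorial : ℝ)⁻¹) *
    Polynomial.derivative^[n] ((Polynomial.X ^ 2 - 1) ^ n)

/-- The associated Legendre function `P_l^m` (with Condon–Shortley phase),
so that `P_{|m|+2k}^{|m|}(0) = (-1)^{|m|+k} (2|m|+2k-1)!!/(2k)!!`. -/
def assocLegendre (l m : ℕ) (x : ℝ) : ℝ :=
  (-1 : ℝ) ^ m * (1 - x ^ 2) ^ ((m : ℝ) / 2) *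
    (Polynomial.derivative^[m] (legendreP l)).eval x

/-- The normalizing constant `α_l^m` of the spherical harmonics. -/
def alphaY (l : ℕ) (m : ℤ) : ℝ :=
  (-1 : ℝ) ^ ((m + |m|) / 2) *
    Real.sqrt ((2 * l + 1) * (l - m.natAbs).factorial /
      (4 * Real.pi * (l + m.natAbs).factorial))

/-- The spherical harmonic `Y_l^m` in latitude/longitude coordinates `(θ, φ)`. -/
def Ylm (l : ℕ) (m : ℤ) (θ φ : ℝ) : ℂ :=
  ((alphaY l m * assocLegendre l m.natAbs (Real.sin θ) : ℝ) : ℂ) *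
    Complex.exp (Complex.I * m * φ)

/-- The surface measure `dS = cos θ dθ dφ` of the unit sphere, in the coordinate box
`[-π/2, π/2] × [-π, π)`. -/
def sphereMeasure : Measure (ℝ × ℝ) :=
  ((volume : Measure (ℝ × ℝ)).restrict
      (Set.Icc (-(Real.pi / 2)) (Real.pi / 2) ×ˢ Set.Ico (-Real.pi) Real.pi)).withDensity
    fun p => ENNReal.ofReal (Real.cos p.1)

/-- The Fourier–Laplace coefficient `ψ̂_l^m = ∫_𝕊 ψ conj(Y_l^m) dS`. -/
def flCoeff (ψ : ℝ → ℝ → ℂ) (l : ℕ) (m : ℤ) : ℂ :=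
  ∫ p : ℝ × ℝ, ψ p.1 p.2 * (starRingEnd ℂ) (Ylm l m p.1 p.2) ∂sphereMeasure

/-- Membership in the fractional Sobolev space `H^s(𝕊)`:
`ψ ∈ L²(𝕊)` and `Σ_{l,m} (l+1)^{2s} |ψ̂_l^m|² < ∞`.
(The coefficients with `|m| > l` vanish automatically.) -/
def MemHs (s : ℝ) (ψ : ℝ → ℝ → ℂ) : Prop :=
  MeasureTheory.MemLp (fun p : ℝ × ℝ => ψ p.1 p.2) 2 sphereMeasure ∧
    Summable fun p : ℕ × ℤ =>
      ((p.1 : ℝ) + 1) ^ (2 * s) * ‖flCoeff ψ p.1 p.2‖ ^ 2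

/-- The `H^s(𝕊)` norm. -/
def HsNorm (s : ℝ) (ψ : ℝ → ℝ → ℂ) : ℝ :=
  Real.sqrt (∑' p : ℕ × ℤ, ((p.1 : ℝ) + 1) ^ (2 * s) * ‖flCoeff ψ p.1 p.2‖ ^ 2)

/-- Axially symmetric functions on the sphere: functions not depending on the longitude. -/
def Axial (ψ : ℝ → ℝ → ℂ) : Prop := ∀ θ φ₁ φ₂, ψ θ φ₁ = ψ θ φ₂

/-- Spherical (latitude/longitude) coordinates on the unit sphere of `ℝ³`. -/
def sphCoord (θ φ : ℝ) : EuclideanSpace ℝ (Fin 3) :=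
  (WithLp.equiv 2 (Fin 3 → ℝ)).symm
    ![Real.cos θ * Real.cos φ, Real.cos θ * Real.sin φ, Real.sin θ]

/-- The open exterior `Ω` of the unit sphere. -/
def extDomain : Set (EuclideanSpace ℝ (Fin 3)) := {x | 1 < ‖x‖}

/-- The closed exterior `cl Ω` of the unit sphere. -/
def closedExt : Set (EuclideanSpace ℝ (Fin 3)) := {x | 1 ≤ ‖x‖}

/-- The Laplacian of a function on `ℝ³`. -/
def lap {F : Type*} [NormedAddCommGroup F] [NormedSpace ℝ F]
    (u : EuclideanSpace ℝ (Fin 3) → F) (x : EuclideanSpace ℝ (Fin 3)) : F :=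
  ∑ i : Fin 3, fderiv ℝ (fun y => fderiv ℝ u y (EuclideanSpace.single i 1)) x
    (EuclideanSpace.single i 1)

/-- The radial derivative `u_r` at a point of the unit sphere (taken from outside). -/
def radialDeriv {F : Type*} [NormedAddCommGroup F] [NormedSpace ℝ F]
    (u : EuclideanSpace ℝ (Fin 3) → F) (θ φ : ℝ) : F :=
  derivWithin (fun r : ℝ => u (r • sphCoord θ φ)) (Set.Ici 1) 1

/-- The latitudinal derivative `u_θ` at a point of the unit sphere. -/
def thetaDeriv {F : Type*} [NormedAddCommGroup F] [NormedSpace ℝ F]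
    (u : EuclideanSpace ℝ (Fin 3) → F) (θ φ : ℝ) : F :=
  deriv (fun t => u (sphCoord t φ)) θ

/-- The boundary trace on the unit sphere of a real-valued function, in coordinates. -/
def traceR (u : EuclideanSpace ℝ (Fin 3) → ℝ) (θ φ : ℝ) : ℂ := (u (sphCoord θ φ) : ℂ)

/-- The boundary trace on the unit sphere of a complex-valued function, in coordinates. -/
def traceC (u : EuclideanSpace ℝ (Fin 3) → ℂ) (θ φ : ℝ) : ℂ := u (sphCoord θ φ)

/-- The Fourier coefficient on the equator `ℰ`. -/
def equatorCoeff (h : ℝ → ℂ) (m : ℤ) : ℂ :=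
  (1 / (2 * Real.pi)) * ∫ φ in (-Real.pi)..Real.pi, h φ * Complex.exp (-(Complex.I * m * φ))

/-- Membership in the fractional Sobolev space `H^s(ℰ)` on the equator. -/
def MemHsE (s : ℝ) (h : ℝ → ℂ) : Prop :=
  MeasureTheory.MemLp h 2 (volume.restrict (Set.Ico (-Real.pi) Real.pi)) ∧
    Summable fun m : ℤ => ((m.natAbs : ℝ) + 1) ^ (2 * s) * ‖equatorCoeff h m‖ ^ 2

/-- The `H^s(ℰ)` norm. -/
def HsNormE (s : ℝ) (h : ℝ → ℂ) : ℝ :=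
  Real.sqrt (∑' m : ℤ, ((m.natAbs : ℝ) + 1) ^ (2 * s) * ‖equatorCoeff h m‖ ^ 2)

/-- The constant `β_l^m`. -/
def betaLM (l : ℕ) (m : ℤ) : ℝ :=
  Real.sqrt (((l : ℝ) - m.natAbs) * ((l : ℝ) + m.natAbs) /
    ((2 * (l : ℝ) - 1) * (2 * (l : ℝ) + 1)))

/-- The constant `γ_l^m = -(l+1)β_l^m / (3(l+2)β_{l+1}^m)`. -/
def gammaLM (l : ℕ) (m : ℤ) : ℝ :=
  -(((l : ℝ) + 1) * betaLM l m) / (3 * ((l : ℝ) + 2) * betaLM (l + 1) m)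

/-- The product `Γ_k^m = ∏_{j=1}^k γ_{|m|+2j-1}^m` (with `Γ_0^m = 1`). -/
def GammaKM (m : ℤ) (k : ℕ) : ℝ :=
  ∏ j ∈ Finset.Icc 1 k, gammaLM (m.natAbs + 2 * j - 1) m

/-- The value `α_{|m|+2k}^m P_{|m|+2k}^{|m|}(0)`. -/
def PzeroM (m : ℤ) (k : ℕ) : ℝ :=
  alphaY (m.natAbs + 2 * k) m * assocLegendre (m.natAbs + 2 * k) m.natAbs 0

/-- The coefficient `a_l^m = f̂_l^m / (6(l+2)β_{l+1}^m)`. -/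
def aCoef (f : ℝ → ℝ → ℂ) (l : ℕ) (m : ℤ) : ℂ :=
  flCoeff f l m / ((6 * ((l : ℝ) + 2) * betaLM (l + 1) m : ℝ) : ℂ)

/-- The solution of the recurrence `b_{|m|-1}^m = b_{|m|}^m = 0`,
`b_{l+1}^m = γ_l^m b_{l-1}^m + a_l^m`; here `bSeq f m n = b_{|m|-1+n}^m`. -/
def bSeq (f : ℝ → ℝ → ℂ) (m : ℤ) : ℕ → ℂ
  | 0 => 0
  | 1 => 0
  | n + 2 => ((gammaLM (m.natAbs + n) m : ℝ) : ℂ) * bSeq f m n + aCoef f (m.natAbs + n) m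

/-- The coefficient `b_l^m`. -/
def bCoef (f : ℝ → ℝ → ℂ) (l : ℕ) (m : ℤ) : ℂ := bSeq f m (l + 1 - m.natAbs)

/-- The constant `ã^m`. -/
def aTilde (f : ℝ → ℝ → ℂ) (h : ℝ → ℂ) (m : ℤ) : ℂ :=
  (equatorCoeff h m - ∑' k : ℕ, bCoef f (m.natAbs + 2 * k) m * ((PzeroM m k : ℝ) : ℂ)) /
    (((∑' k : ℕ, GammaKM m k * PzeroM m k : ℝ)) : ℂ)

/-- The coefficient `c_l^m`: `c_{|m|+2k}^m = Γ_k^m ã^m` and `c_{|m|+2k-1}^m = 0`. -/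
def cCoef (f : ℝ → ℝ → ℂ) (h : ℝ → ℂ) (l : ℕ) (m : ℤ) : ℂ :=
  if m.natAbs ≤ l ∧ (l - m.natAbs) % 2 = 0 then
    ((GammaKM m ((l - m.natAbs) / 2) : ℝ) : ℂ) * aTilde f h m
  else 0

/-- The boundary trace `v(1, θ, φ)` of the formal series solution. -/
def vTraceS (f : ℝ → ℝ → ℂ) (h : ℝ → ℂ) (θ φ : ℝ) : ℂ :=
  ∑' p : ℕ × ℤ, (bCoef f p.1 p.2 + cCoef f h p.1 p.2) * Ylm p.1 p.2 θ φ

/-- The latitude of a point of `ℝ³`. -/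
def latitude (x : EuclideanSpace ℝ (Fin 3)) : ℝ := Real.arcsin (x 2 / ‖x‖)

/-- The longitude of a point of `ℝ³`. -/
def longitude (x : EuclideanSpace ℝ (Fin 3)) : ℝ :=
  Complex.arg ((x 0 : ℂ) + (x 1 : ℂ) * Complex.I)

/-- The formal series solution `v = Σ (b_l^m + c_l^m) r^{-l-1} Y_l^m(θ, φ)`. -/
def vFun (f : ℝ → ℝ → ℂ) (h : ℝ → ℂ) (x : EuclideanSpace ℝ (Fin 3)) : ℂ :=
  ∑' p : ℕ × ℤ, (bCoef f p.1 p.2 + cCoef f h p.1 p.2) * ((‖x‖ : ℂ) ^ (-(p.1 : ℤ) - 1)) *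
    Ylm p.1 p.2 (latitude x) (longitude x)

/-- `v` is a classical solution of the linearized (oblique derivative) problem
`Δv = 0` in `Ω`, `∇d⋅∇v = -2 sin θ v_r + cos θ v_θ = f/2` on `𝕊`, `v → 0` at infinity,
`v = h` on the equator; complex-valued version. -/
def SolvesObliqueC (v : EuclideanSpace ℝ (Fin 3) → ℂ) (f : ℝ → ℝ → ℂ) (h : ℝ → ℂ) : Prop :=
  ContDiffOn ℝ 2 v extDomain ∧ ContDiffOn ℝ 1 v closedExt ∧
    (∀ x ∈ extDomain, lap v x = 0) ∧
    (∀ θ ∈ Set.Icc (-(Real.pi / 2)) (Real.pi / 2), ∀ φ : ℝ,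
      -2 * (Real.sin θ : ℂ) * radialDeriv v θ φ + (Real.cos θ : ℂ) * thetaDeriv v θ φ
        = f θ φ / 2) ∧
    Filter.Tendsto v (Bornology.cobounded _) (nhds 0) ∧
    (∀ φ : ℝ, v (sphCoord 0 φ) = h φ)

/-- Real-valued version of `SolvesObliqueC`. -/
def SolvesObliqueR (v : EuclideanSpace ℝ (Fin 3) → ℝ) (f : ℝ → ℝ → ℝ) (h : ℝ → ℝ) : Prop :=
  ContDiffOn ℝ 2 v extDomain ∧ ContDiffOn ℝ 1 v closedExt ∧
    (∀ x ∈ extDomain, lap v x = 0) ∧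
    (∀ θ ∈ Set.Icc (-(Real.pi / 2)) (Real.pi / 2), ∀ φ : ℝ,
      -2 * Real.sin θ * radialDeriv v θ φ + Real.cos θ * thetaDeriv v θ φ = f θ φ / 2) ∧
    Filter.Tendsto v (Bornology.cobounded _) (nhds 0) ∧
    (∀ φ : ℝ, v (sphCoord 0 φ) = h φ)

/-! The traces are expanded in zonal harmonics, so that the product of their latitudinal
derivatives becomes a sum, over pairs of degrees `j` and `k`, of the products
`(1 - x ^ 2) * P_j' * P_k'` in the variable `x = sin θ`. Such a product contains only degrees
`l ≤ j + k`. Split the sum according to which factor has the larger degree, say `k ≤ j`. For fixed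
`k`, Bessel's inequality and Sonin's bound
`(1 - x ^ 2) * P_k' ^ 2 ≤ k * (k + 1)` control the components of degree at least `n` by the
coefficients of degree `j ≥ n / 2`, and summation by parts over `n` turns this into an estimate of
the `H^s` norm with a loss of `(k + 1) ^ 3`. The Cauchy-Schwarz inequality over `k` absorbs the
loss, because `∑ (k + 1) ^ (1 - 2 * s)` converges for `s > 1`. -/

section LegendrePolynomials

open Polynomial

lemma X_sq_sub_one_mul_derivative_pow (n : ℕ) :
    (X ^ 2 - 1 : ℝ[X]) * derivative ((X ^ 2 - 1) ^ n) =
      2 * (n : ℝ[X]) * X * (X ^ 2 - 1) ^ n := by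
  cases n with
  | zero => simp
  | succ n =>
    simp only [derivative_pow_succ, derivative_sub, derivative_X, derivative_one, map_add,
      map_natCast, map_one]
    push_cast
    ring

lemma iterate_derivative_X_sq_sub_one_pow_ode (n k : ℕ) :
    (X ^ 2 - 1 : ℝ[X]) * derivative^[k + 2] ((X ^ 2 - 1) ^ n)
      + 2 * ((k : ℝ[X]) + 1 - (n : ℝ[X])) * X * derivative^[k + 1] ((X ^ 2 - 1) ^ n)
      + ((k : ℝ[X]) + 1) * ((k : ℝ[X]) - 2 * (n : ℝ[X])) * derivative^[k] ((X ^ 2 - 1) ^ n)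
      = 0 := by
  induction k with
  | zero =>
    have h := congrArg derivative (X_sq_sub_one_mul_derivative_pow n)
    simp only [derivative_mul, derivative_sub, derivative_X_pow, derivative_one, derivative_X,
      derivative_natCast, derivative_ofNat, map_natCast] at h
    simp only [Function.iterate_succ_apply', Function.iterate_zero_apply]
    push_cast at h ⊢
    linear_combination h
  | succ k ih =>
    have h := congrArg derivative ih
    simp only [derivative_add, derivative_mul, derivative_sub, derivative_X_pow, derivative_one,
      derivative_X, derivative_natCast, derivative_ofNat, derivative_zero, map_natCast,
      ← Function.iterate_succ_apply'] at h
    push_cast at h ⊢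
    linear_combination h

lemma derivative_one_sub_X_sq_mul_derivative_legendreP (n : ℕ) :
    derivative ((1 - X ^ 2) * derivative (legendreP n)) = -((n * (n + 1) : ℝ) • legendreP n) := by
  have h := iterate_derivative_X_sq_sub_one_pow_ode n n
  simp only [legendreP, smul_eq_C_mul, derivative_mul, derivative_sub, derivative_X_pow,
    derivative_one, derivative_C, derivative_zero, map_natCast, map_mul, map_add, map_one,
    ← Function.iterate_succ_apply']
  push_cast
  linear_combination -(C ((2 ^ n * n.factorial : ℝ)⁻¹)) * h

lemma natDegree_X_sq_sub_one_pow (n : ℕ) : ((X ^ 2 - 1 : ℝ[X]) ^ n).natDegree = 2 * n := by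
  have h : (X ^ 2 - 1 : ℝ[X]).natDegree = 2 := by compute_degree!
  rw [natDegree_pow, h, mul_comm]

lemma coeff_legendreP_self_ne_zero (n : ℕ) : (legendreP n).coeff n ≠ 0 := by
  have hmonic : ((X ^ 2 - 1 : ℝ[X]) ^ n).Monic := Monic.pow (by monicity!) n
  have hlead : ((X ^ 2 - 1 : ℝ[X]) ^ n).coeff (n + n) = 1 := by
    rw [← two_mul, ← natDegree_X_sq_sub_one_pow, hmonic.coeff_natDegree]
  have hdesc : (n + n).descFactorial n ≠ 0 := by
    rw [Ne, Nat.descFactorial_eq_zero_iff_lt]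
    omega
  rw [legendreP, coeff_C_mul, coeff_iterate_derivative, hlead, nsmul_one]
  positivity

lemma natDegree_legendreP (n : ℕ) : (legendreP n).natDegree = n := by
  refine le_antisymm ?_ (le_natDegree_of_ne_zero (coeff_legendreP_self_ne_zero n))
  refine (natDegree_C_mul_le _ _).trans ((natDegree_iterate_derivative _ _).trans ?_)
  rw [natDegree_X_sq_sub_one_pow]
  omega

/-- The Legendre polynomials as a `Polynomial.Sequence`, which gives access to the spans of
their initial segments. -/
def legendreSequence : Polynomial.Sequence ℝ where
  elems' := legendreP
  degree_eq' n := by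
    have hne : legendreP n ≠ 0 := fun h => coeff_legendreP_self_ne_zero n (by simp [h])
    rw [degree_eq_natDegree hne, natDegree_legendreP]

lemma isUnit_leadingCoeff_legendreSequence (n : ℕ) :
    IsUnit (legendreSequence n).leadingCoeff :=
  (leadingCoeff_ne_zero.2 (legendreSequence.ne_zero n)).isUnit

/-- At an endpoint `c = ±1`, Taylor expansion turns `(X ^ 2 - 1) ^ n` into
`(X + 2 * c) ^ n * X ^ n`, so its `n`-th derivative there is `n! * (2 * c) ^ n`. -/
lemma eval_legendreP_of_sq_eq_one {c : ℝ} (hc : c ^ 2 = 1) (n : ℕ) :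
    (legendreP n).eval c = c ^ n := by
  have htaylor : taylor c ((X ^ 2 - 1 : ℝ[X]) ^ n) = (X + C (2 * c)) ^ n * X ^ n := by
    have hC : (C c : ℝ[X]) ^ 2 = 1 := by rw [← C_pow, hc, C_1]
    rw [taylor_pow, ← mul_pow, map_sub, taylor_pow, taylor_X, taylor_one, C_mul, map_ofNat, map_one]
    congr 1
    linear_combination hC
  have hderiv : (derivative^[n] ((X ^ 2 - 1 : ℝ[X]) ^ n)).eval c = n.factorial * (2 * c) ^ n := by
    rw [← factorial_smul_hasseDeriv, LinearMap.smul_apply, eval_smul, nsmul_eq_mul,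
      ← taylor_coeff, htaylor, coeff_mul_X_pow', if_pos le_rfl, Nat.sub_self,
      coeff_zero_eq_eval_zero]
    simp
  rw [legendreP, eval_mul, eval_C, hderiv, mul_pow]
  have := n.factorial_ne_zero
  field_simp

lemma sq_eval_legendreP_of_sq_eq_one {c : ℝ} (hc : c ^ 2 = 1) (n : ℕ) :
    (legendreP n).eval c ^ 2 = 1 := by
  rw [eval_legendreP_of_sq_eq_one hc, ← pow_mul, mul_comm, pow_mul, hc, one_pow]

/-- Sonin's function `n (n + 1) P_n ^ 2 + (1 - x ^ 2) P_n' ^ 2` has derivative `2 x P_n' ^ 2`, so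
on `[-1, 1]` it is maximal at the endpoints. -/
lemma sonin_le (n : ℕ) {x : ℝ} (hx : x ∈ Set.Icc (-1 : ℝ) 1) :
    n * (n + 1) * (legendreP n).eval x ^ 2 + (1 - x ^ 2) * (derivative (legendreP n)).eval x ^ 2
      ≤ n * (n + 1) := by
  set F : ℝ[X] := (n * (n + 1) : ℝ) • legendreP n ^ 2 + (1 - X ^ 2) * derivative (legendreP n) ^ 2
    with hF
  have hF_eval (y : ℝ) : F.eval y = n * (n + 1) * (legendreP n).eval y ^ 2
      + (1 - y ^ 2) * (derivative (legendreP n)).eval y ^ 2 := by simp [hF]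
  have hF_endpoint {c : ℝ} (hc : c ^ 2 = 1) : F.eval c = n * (n + 1) := by
    rw [hF_eval, sq_eval_legendreP_of_sq_eq_one hc, hc]
    ring
  have hF_derivative : derivative F = 2 * X * derivative (legendreP n) ^ 2 := by
    have h := derivative_one_sub_X_sq_mul_derivative_legendreP n
    simp only [derivative_mul, derivative_sub, derivative_X_pow, derivative_one, map_natCast] at h
    simp only [hF, derivative_add, derivative_smul, derivative_mul, derivative_sub,
      derivative_X_pow, derivative_one, map_natCast, sq (legendreP n),
      sq (derivative (legendreP n))]
    simp only [smul_eq_C_mul] at h ⊢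
    linear_combination 2 * derivative (legendreP n) * h
  have hF_deriv (y : ℝ) :
      deriv (fun y => F.eval y) y = 2 * y * (derivative (legendreP n)).eval y ^ 2 := by
    simp [Polynomial.deriv, hF_derivative]
  rw [← hF_eval]
  rcases le_total 0 x with h | h
  · have hmono : MonotoneOn (fun y => F.eval y) (Set.Icc 0 1) := by
      refine monotoneOn_of_deriv_nonneg (convex_Icc 0 1) F.continuousOn F.differentiableOn ?_
      intro y hy
      rw [interior_Icc] at hy
      have := hy.1
      rw [hF_deriv]
      positivity
    exact (hmono ⟨h, hx.2⟩ ⟨zero_le_one, le_rfl⟩ hx.2).trans_eq (hF_endpoint (by norm_num))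
  · have hanti : AntitoneOn (fun y => F.eval y) (Set.Icc (-1) 0) := by
      refine antitoneOn_of_deriv_nonpos (convex_Icc (-1) 0) F.continuousOn F.differentiableOn ?_
      intro y hy
      rw [interior_Icc] at hy
      rw [hF_deriv]
      exact mul_nonpos_of_nonpos_of_nonneg (by linarith [hy.2]) (sq_nonneg _)
    exact (hanti ⟨le_rfl, by norm_num⟩ ⟨hx.1, h⟩ hx.1).trans_eq (hF_endpoint (by norm_num))

lemma one_sub_sq_nonneg_of_mem_Icc {x : ℝ} (hx : x ∈ Set.Icc (-1 : ℝ) 1) : 0 ≤ 1 - x ^ 2 :=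
  sub_nonneg.2 ((sq_le_one_iff_abs_le_one x).2 (abs_le.2 hx))

lemma sq_eval_legendreP_le_one (n : ℕ) {x : ℝ} (hx : x ∈ Set.Icc (-1 : ℝ) 1) :
    (legendreP n).eval x ^ 2 ≤ 1 := by
  rcases eq_or_ne n 0 with rfl | hn
  · simp [legendreP]
  · have hgrad := mul_nonneg (one_sub_sq_nonneg_of_mem_Icc hx)
      (sq_nonneg ((derivative (legendreP n)).eval x))
    have hpos : (0 : ℝ) < n * (n + 1) := by positivity
    exact le_of_mul_le_mul_left (by linarith [sonin_le n hx]) hpos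

lemma one_sub_sq_mul_sq_eval_derivative_legendreP_le (n : ℕ) {x : ℝ}
    (hx : x ∈ Set.Icc (-1 : ℝ) 1) :
    (1 - x ^ 2) * (derivative (legendreP n)).eval x ^ 2 ≤ n * (n + 1) := by
  have : 0 ≤ n * (n + 1) * (legendreP n).eval x ^ 2 := by positivity
  linarith [sonin_le n hx]

end LegendrePolynomials

section Orthogonality

open Polynomial

/-- Integration of polynomials over `[-1, 1]`, as a linear functional. -/
def polyIntegral : ℝ[X] →ₗ[ℝ] ℝ where
  toFun p := ∫ x in (-1 : ℝ)..1, p.eval x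
  map_add' p r := by
    simp only [eval_add]
    exact intervalIntegral.integral_add (p.continuous.intervalIntegrable _ _)
      (r.continuous.intervalIntegrable _ _)
  map_smul' c p := by simp [eval_smul]

lemma polyIntegral_apply (p : ℝ[X]) : polyIntegral p = ∫ x in (-1 : ℝ)..1, p.eval x := rfl

lemma polyIntegral_derivative (p : ℝ[X]) :
    polyIntegral (derivative p) = p.eval 1 - p.eval (-1) :=
  intervalIntegral.integral_eq_sub_of_hasDerivAt (fun x _ => p.hasDerivAt x)
    ((derivative p).continuous.intervalIntegrable _ _)

lemma polyIntegral_mono {p r : ℝ[X]} (h : ∀ x ∈ Set.Icc (-1 : ℝ) 1, p.eval x ≤ r.eval x) :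
    polyIntegral p ≤ polyIntegral r :=
  intervalIntegral.integral_mono_on (by norm_num) (p.continuous.intervalIntegrable _ _)
    (r.continuous.intervalIntegrable _ _) h

lemma polyIntegral_nonneg {p : ℝ[X]} (h : ∀ x ∈ Set.Icc (-1 : ℝ) 1, 0 ≤ p.eval x) :
    0 ≤ polyIntegral p := by
  simpa using polyIntegral_mono (p := 0) (by simpa using h)

/-- In the variable `x = sin θ`, the product `(∂p/∂θ) (∂r/∂θ)` of latitudinal derivatives. -/
def gradMul : ℝ[X] →ₗ[ℝ] ℝ[X] →ₗ[ℝ] ℝ[X] :=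
  LinearMap.mk₂ ℝ (fun p r => (1 - X ^ 2) * derivative p * derivative r)
    (fun p p' r => by simp only [derivative_add]; ring)
    (fun c p r => by simp)
    (fun p r r' => by simp only [derivative_add]; ring)
    (fun c p r => by simp)

lemma gradMul_apply (p r : ℝ[X]) :
    gradMul p r = (1 - X ^ 2) * derivative p * derivative r := rfl

lemma gradMul_comm (p r : ℝ[X]) : gradMul p r = gradMul r p := by
  simp only [gradMul_apply]
  ring

lemma eval_gradMul (p r : ℝ[X]) (x : ℝ) :
    (gradMul p r).eval x = (1 - x ^ 2) * (derivative p).eval x * (derivative r).eval x := by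
  simp [gradMul_apply]

lemma polyIntegral_gradMul_legendreP (n : ℕ) (r : ℝ[X]) :
    polyIntegral (gradMul (legendreP n) r) = n * (n + 1) * polyIntegral (legendreP n * r) := by
  have hparts := polyIntegral_derivative ((1 - X ^ 2) * derivative (legendreP n) * r)
  rw [derivative_mul, derivative_one_sub_X_sq_mul_derivative_legendreP, neg_mul, smul_mul_assoc,
    map_add, map_neg, map_smul, smul_eq_mul] at hparts
  simp only [eval_mul, eval_sub, eval_one, eval_pow, eval_X] at hparts
  rw [gradMul_apply]
  linear_combination hparts

lemma polyIntegral_legendreP_mul_legendreP_of_ne {j k : ℕ} (hjk : j ≠ k) :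
    polyIntegral (legendreP j * legendreP k) = 0 := by
  have hj := polyIntegral_gradMul_legendreP j (legendreP k)
  have hk := polyIntegral_gradMul_legendreP k (legendreP j)
  rw [gradMul_comm, hk, mul_comm (legendreP k)] at hj
  have hfactor :
      ((k : ℝ) - j) * (k + j + 1) * polyIntegral (legendreP j * legendreP k) = 0 := by
    linear_combination hj
  have hsub : (k : ℝ) - j ≠ 0 := sub_ne_zero.2 (Nat.cast_injective.ne hjk.symm)
  exact (mul_eq_zero.1 hfactor).resolve_left (mul_ne_zero hsub (by positivity))

lemma polyIntegral_legendreP_mul_of_degree_lt {n : ℕ} {r : ℝ[X]}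
    (hr : r.degree < (n : WithBot ℕ)) :
    polyIntegral (legendreP n * r) = 0 := by
  have hspan : r ∈ Submodule.span ℝ (legendreSequence '' Set.Iio n) := by
    rw [legendreSequence.span_degreeLT fun i _ => isUnit_leadingCoeff_legendreSequence i]
    exact mem_degreeLT.2 hr
  refine LinearMap.eqOn_span (f := polyIntegral ∘ₗ LinearMap.mulLeft ℝ (legendreP n)) (g := 0) ?_
    hspan
  rintro _ ⟨i, hi, rfl⟩
  exact polyIntegral_legendreP_mul_legendreP_of_ne (ne_of_gt hi)

lemma degree_X_mul_derivative_legendreP_sub_lt (n : ℕ) :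
    (X * derivative (legendreP n) - (n : ℝ) • legendreP n).degree < (n : WithBot ℕ) := by
  rw [degree_lt_iff_coeff_zero]
  intro m hm
  have hcoeff : (X * derivative (legendreP n)).coeff m = m * (legendreP n).coeff m := by
    cases m with
    | zero => simp
    | succ m => rw [coeff_X_mul, coeff_derivative, mul_comm, Nat.cast_succ]
  rw [coeff_sub, coeff_smul, hcoeff, smul_eq_mul]
  rcases hm.eq_or_lt with rfl | hm
  · exact sub_self _
  · rw [coeff_eq_zero_of_natDegree_lt ((natDegree_legendreP n).trans_lt hm), mul_zero, mul_zero,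
      sub_zero]

lemma polyIntegral_legendreP_mul_self (n : ℕ) :
    polyIntegral (legendreP n * legendreP n) = 2 / (2 * n + 1) := by
  have hlower := polyIntegral_legendreP_mul_of_degree_lt
    (degree_X_mul_derivative_legendreP_sub_lt n)
  rw [mul_sub, mul_smul_comm, map_sub, map_smul, smul_eq_mul] at hlower
  have hparts := polyIntegral_derivative (X * legendreP n ^ 2)
  have hderiv : derivative (X * legendreP n ^ 2) =
      legendreP n * legendreP n + (2 : ℝ) • (legendreP n * (X * derivative (legendreP n))) := by
    simp only [derivative_mul, derivative_X, sq, two_smul]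
    ring
  rw [hderiv, map_add, map_smul, smul_eq_mul, eval_mul, eval_mul, eval_pow, eval_pow, eval_X,
    eval_X, sq_eval_legendreP_of_sq_eq_one (one_pow 2),
    sq_eval_legendreP_of_sq_eq_one neg_one_sq] at hparts
  rw [eq_div_iff (by positivity)]
  linear_combination hparts - 2 * hlower

end Orthogonality

section NormalizedLegendre

open Polynomial

/-- The Legendre polynomials, normalized in `L²([-1, 1])`. -/
def normalizedLegendre (l : ℕ) : ℝ[X] := √((2 * l + 1) / 2) • legendreP l

lemma polyIntegral_normalizedLegendre_mul (j k : ℕ) :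
    polyIntegral (normalizedLegendre j * normalizedLegendre k) = if j = k then 1 else 0 := by
  simp only [normalizedLegendre, smul_mul_smul_comm, map_smul, smul_eq_mul]
  split_ifs with hjk
  · rw [hjk, Real.mul_self_sqrt (by positivity), polyIntegral_legendreP_mul_self]
    field_simp
  · rw [polyIntegral_legendreP_mul_legendreP_of_ne hjk, mul_zero]

lemma polyIntegral_gradMul_normalizedLegendre (j : ℕ) (r : ℝ[X]) :
    polyIntegral (gradMul (normalizedLegendre j) r) =
      j * (j + 1) * polyIntegral (normalizedLegendre j * r) := by
  simp only [normalizedLegendre, map_smul, LinearMap.smul_apply, smul_mul_assoc, smul_eq_mul,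
    polyIntegral_gradMul_legendreP]
  ring

lemma polyIntegral_mul_normalizedLegendre_of_natDegree_lt {l : ℕ} {r : ℝ[X]}
    (hr : r.natDegree < l) : polyIntegral (r * normalizedLegendre l) = 0 := by
  rw [normalizedLegendre, mul_smul_comm, map_smul, mul_comm r,
    polyIntegral_legendreP_mul_of_degree_lt (degree_le_natDegree.trans_lt (by exact_mod_cast hr)),
    smul_zero]

lemma natDegree_gradMul_le (p r : ℝ[X]) : (gradMul p r).natDegree ≤ p.natDegree + r.natDegree := by
  by_cases hp : p.natDegree = 0
  · simp [gradMul_apply, derivative_of_natDegree_zero hp]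
  by_cases hr : r.natDegree = 0
  · simp [gradMul_apply, derivative_of_natDegree_zero hr]
  have h2 : (1 - X ^ 2 : ℝ[X]).natDegree ≤ 2 := by compute_degree
  have hp' := natDegree_derivative_le p
  have hr' := natDegree_derivative_le r
  have h := natDegree_mul_le_of_le (natDegree_mul_le_of_le h2 hp') hr'
  rw [gradMul_apply]
  omega

lemma natDegree_normalizedLegendre_le (l : ℕ) : (normalizedLegendre l).natDegree ≤ l :=
  (natDegree_smul_le _ _).trans (natDegree_legendreP l).le

lemma polyIntegral_gradMul_mul_normalizedLegendre_of_lt {j k l : ℕ} (h : j + k < l) :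
    polyIntegral (gradMul (normalizedLegendre j) (normalizedLegendre k) *
      normalizedLegendre l) = 0 :=
  polyIntegral_mul_normalizedLegendre_of_natDegree_lt <|
    (natDegree_gradMul_le _ _).trans_lt <| (Nat.add_le_add (natDegree_normalizedLegendre_le j)
      (natDegree_normalizedLegendre_le k)).trans_lt h

lemma sq_eval_normalizedLegendre_le (l : ℕ) {x : ℝ} (hx : x ∈ Set.Icc (-1 : ℝ) 1) :
    (normalizedLegendre l).eval x ^ 2 ≤ l + 1 := by
  rw [normalizedLegendre, eval_smul, smul_eq_mul, mul_pow, Real.sq_sqrt (by positivity)]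
  nlinarith [sq_eval_legendreP_le_one l hx, sq_nonneg ((legendreP l).eval x)]

lemma one_sub_sq_mul_sq_eval_derivative_normalizedLegendre_le (l : ℕ) {x : ℝ}
    (hx : x ∈ Set.Icc (-1 : ℝ) 1) :
    (1 - x ^ 2) * (derivative (normalizedLegendre l)).eval x ^ 2 ≤ ((l : ℝ) + 1) ^ 3 := by
  rw [normalizedLegendre, derivative_smul, eval_smul, smul_eq_mul, mul_pow,
    Real.sq_sqrt (by positivity), mul_left_comm]
  calc (2 * (l : ℝ) + 1) / 2 * ((1 - x ^ 2) * (derivative (legendreP l)).eval x ^ 2)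
      ≤ (2 * l + 1) / 2 * (l * (l + 1)) :=
        mul_le_mul_of_nonneg_left (one_sub_sq_mul_sq_eval_derivative_legendreP_le l hx)
          (by positivity)
    _ ≤ (l + 1) * ((l + 1) * (l + 1)) := by gcongr <;> linarith
    _ = ((l : ℝ) + 1) ^ 3 := by ring

/-- The `L²([-1, 1])` inner product on polynomials. -/
@[reducible]
def polyInnerCore : PreInnerProductSpace.Core ℝ ℝ[X] where
  inner p r := polyIntegral (p * r)
  conj_inner_symm p r := by simp [mul_comm]
  re_inner_nonneg p := polyIntegral_nonneg fun x _ => by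
    rw [eval_mul]
    exact mul_self_nonneg _
  add_left p r t := by rw [add_mul, map_add]
  smul_left p r c := by simp

lemma sum_sq_polyIntegral_mul_normalizedLegendre_le (F : Finset ℕ) (p : ℝ[X]) :
    ∑ l ∈ F, polyIntegral (p * normalizedLegendre l) ^ 2 ≤ polyIntegral (p * p) := by
  let := polyInnerCore
  let : SeminormedAddCommGroup ℝ[X] := InnerProductSpace.Core.toSeminormedAddCommGroup (𝕜 := ℝ)
  let : InnerProductSpace ℝ ℝ[X] := InnerProductSpace.ofCore polyInnerCore
  have hnormed : Orthonormal ℝ normalizedLegendre :=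
    orthonormal_iff_ite.2 polyIntegral_normalizedLegendre_mul
  calc ∑ l ∈ F, polyIntegral (p * normalizedLegendre l) ^ 2
      = ∑ l ∈ F, ‖inner ℝ (normalizedLegendre l) p‖ ^ 2 :=
        Finset.sum_congr rfl fun l _ => by rw [Real.norm_eq_abs, sq_abs, mul_comm]; rfl
    _ ≤ ‖p‖ ^ 2 := hnormed.sum_inner_products_le p
    _ = polyIntegral (p * p) := (real_inner_self_eq_norm_sq p).symm

end NormalizedLegendre

section FiniteProductEstimate

open Polynomial

/-- The weight of degree `l` in the square of the `H^s` norm. -/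
def sobolevWeight (s : ℝ) (l : ℕ) : ℝ := ((l : ℝ) + 1) ^ (2 * s)

lemma sobolevWeight_pos (s : ℝ) (l : ℕ) : 0 < sobolevWeight s l := by
  unfold sobolevWeight
  positivity

lemma sobolevWeight_add_one (s : ℝ) (l : ℕ) :
    sobolevWeight (s + 1) l = sobolevWeight s l * ((l : ℝ) + 1) ^ 2 := by
  rw [sobolevWeight, sobolevWeight, mul_add, mul_one, Real.rpow_add (by positivity),
    Real.rpow_two]

/-- The finite normalized Legendre expansion with coefficients `a` and degrees in `S`. -/
def legendreSum (S : Finset ℕ) (a : ℕ → ℝ) : ℝ[X] := ∑ j ∈ S, a j • normalizedLegendre j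

lemma polyIntegral_gradMul_legendreSum_self (S : Finset ℕ) (a : ℕ → ℝ) :
    polyIntegral (gradMul (legendreSum S a) (legendreSum S a)) =
      ∑ j ∈ S, j * (j + 1) * a j ^ 2 := by
  simp only [legendreSum, map_sum, LinearMap.sum_apply, map_smul, LinearMap.smul_apply,
    polyIntegral_gradMul_normalizedLegendre, polyIntegral_normalizedLegendre_mul, smul_eq_mul]
  refine Finset.sum_congr rfl fun j hj => ?_
  rw [Finset.sum_eq_single j (fun i _ hij => by simp [hij]) fun h => absurd hj h]
  simp only [if_true]
  ring

lemma polyIntegral_gradMul_mul_self_le (k : ℕ) (p : ℝ[X]) :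
    polyIntegral (gradMul (normalizedLegendre k) p * gradMul (normalizedLegendre k) p) ≤
      ((k : ℝ) + 1) ^ 3 * polyIntegral (gradMul p p) := by
  rw [← smul_eq_mul (((k : ℝ) + 1) ^ 3), ← map_smul]
  refine polyIntegral_mono fun x hx => ?_
  simp only [eval_mul, eval_smul, eval_gradMul, smul_eq_mul]
  calc _ = ((1 - x ^ 2) * (derivative (normalizedLegendre k)).eval x ^ 2) *
        ((1 - x ^ 2) * (derivative p).eval x * (derivative p).eval x) := by ring
    _ ≤ _ := by
      refine mul_le_mul_of_nonneg_right
        (one_sub_sq_mul_sq_eval_derivative_normalizedLegendre_le k hx) ?_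
      rw [mul_assoc]
      exact mul_nonneg (one_sub_sq_nonneg_of_mem_Icc hx) (mul_self_nonneg _)

/-- Since `k ≤ j`, the product of degrees `k` and `j` only reaches degrees `l ≤ 2 * j`. -/
lemma sum_Ico_sq_polyIntegral_gradMul_le {S : Finset ℕ} {k : ℕ} (hk : ∀ j ∈ S, k ≤ j)
    (a : ℕ → ℝ) (n L : ℕ) :
    ∑ l ∈ Finset.Ico n L, polyIntegral
        (gradMul (normalizedLegendre k) (legendreSum S a) * normalizedLegendre l) ^ 2 ≤
      ∑ j ∈ S with n ≤ 2 * j, ((k : ℝ) + 1) ^ 3 * (j * (j + 1) * a j ^ 2) := by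
  set S' := S.filter fun j => n ≤ 2 * j
  have hrestrict : ∀ l ∈ Finset.Ico n L,
      polyIntegral (gradMul (normalizedLegendre k) (legendreSum S a) * normalizedLegendre l) =
        polyIntegral
          (gradMul (normalizedLegendre k) (legendreSum S' a) * normalizedLegendre l) := by
    intro l hl
    simp only [legendreSum, map_sum, Finset.sum_mul, map_smul, smul_mul_assoc]
    refine (Finset.sum_subset (Finset.filter_subset _ S) fun j hj hj' => ?_).symm
    have hjn : 2 * j < n := by simpa [S', hj] using hj'
    have hln := (Finset.mem_Ico.1 hl).1
    have hkj := hk j hj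
    rw [polyIntegral_gradMul_mul_normalizedLegendre_of_lt (by omega), smul_zero]
  calc _ = ∑ l ∈ Finset.Ico n L, polyIntegral
        (gradMul (normalizedLegendre k) (legendreSum S' a) * normalizedLegendre l) ^ 2 :=
        Finset.sum_congr rfl fun l hl => by rw [hrestrict l hl]
    _ ≤ _ := sum_sq_polyIntegral_mul_normalizedLegendre_le _ _
    _ ≤ _ := polyIntegral_gradMul_mul_self_le k _
    _ = _ := by rw [polyIntegral_gradMul_legendreSum_self, Finset.mul_sum]

/-- Summation by parts with the increments `(n + 1) ^ r - n ^ r` of the weight. -/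
lemma sum_rpow_mul_le_of_sum_Ico_le {r : ℝ} (hr : 0 < r) {S : Finset ℕ} {L : ℕ} {x y : ℕ → ℝ}
    (hy : ∀ j, 0 ≤ y j)
    (hxy : ∀ n, ∑ l ∈ Finset.Ico n L, x l ≤ ∑ j ∈ S with n ≤ 2 * j, y j) :
    ∑ l ∈ Finset.range L, ((l : ℝ) + 1) ^ r * x l ≤
      2 ^ r * ∑ j ∈ S, ((j : ℝ) + 1) ^ r * y j := by
  set δ : ℕ → ℝ := fun n => ((n : ℝ) + 1) ^ r - (n : ℝ) ^ r
  have hδ n : 0 ≤ δ n :=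
    sub_nonneg.2 (Real.rpow_le_rpow n.cast_nonneg (by linarith) hr.le)
  have hsum_δ l : ∑ n ∈ Finset.range l, δ n = (l : ℝ) ^ r := by
    have h := Finset.sum_range_sub (fun n : ℕ => (n : ℝ) ^ r) l
    simpa [δ, Real.zero_rpow hr.ne'] using h
  calc ∑ l ∈ Finset.range L, ((l : ℝ) + 1) ^ r * x l
      = ∑ l ∈ Finset.range L, ∑ n ∈ Finset.range (l + 1), δ n * x l := by
        refine Finset.sum_congr rfl fun l _ => ?_
        rw [← Finset.sum_mul, hsum_δ, Nat.cast_succ]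
    _ = ∑ n ∈ Finset.range L, ∑ l ∈ Finset.Ico n L, δ n * x l :=
        Finset.sum_comm' fun l n => by simp only [Finset.mem_range, Finset.mem_Ico]; omega
    _ ≤ ∑ n ∈ Finset.range L, ∑ j ∈ S with n ≤ 2 * j, δ n * y j := by
        refine Finset.sum_le_sum fun n _ => ?_
        rw [← Finset.mul_sum, ← Finset.mul_sum]
        exact mul_le_mul_of_nonneg_left (hxy n) (hδ n)
    _ = ∑ j ∈ S, ∑ n ∈ Finset.range L with n ≤ 2 * j, δ n * y j :=
        Finset.sum_comm' fun n j => by simp only [Finset.mem_range, Finset.mem_filter]; tauto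
    _ ≤ ∑ j ∈ S, ∑ n ∈ Finset.range (2 * j + 1), δ n * y j := by
        refine Finset.sum_le_sum fun j _ => Finset.sum_le_sum_of_subset_of_nonneg ?_
          fun n _ _ => mul_nonneg (hδ n) (hy j)
        intro n hn
        exact Finset.mem_range.2 (Nat.lt_succ_of_le (Finset.mem_filter.1 hn).2)
    _ ≤ ∑ j ∈ S, (2 * ((j : ℝ) + 1)) ^ r * y j := by
        refine Finset.sum_le_sum fun j _ => ?_
        rw [← Finset.sum_mul, hsum_δ]
        refine mul_le_mul_of_nonneg_right (Real.rpow_le_rpow (by positivity) ?_ hr.le) (hy j)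
        push_cast
        linarith
    _ = 2 ^ r * ∑ j ∈ S, ((j : ℝ) + 1) ^ r * y j := by
        rw [Finset.mul_sum]
        refine Finset.sum_congr rfl fun j _ => ?_
        rw [Real.mul_rpow zero_le_two (by positivity), mul_assoc]

lemma sum_sobolevWeight_mul_sq_polyIntegral_gradMul_le {s : ℝ} (hs : 0 < s) {S : Finset ℕ}
    {k : ℕ} (hk : ∀ j ∈ S, k ≤ j) (a : ℕ → ℝ) (L : ℕ) :
    ∑ l ∈ Finset.range L, sobolevWeight s l * polyIntegral
        (gradMul (normalizedLegendre k) (legendreSum S a) * normalizedLegendre l) ^ 2 ≤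
      2 ^ (2 * s) * ((k : ℝ) + 1) ^ 3 * ∑ j ∈ S, sobolevWeight (s + 1) j * a j ^ 2 := by
  refine (sum_rpow_mul_le_of_sum_Ico_le (by linarith) (fun j => by positivity)
    fun n => sum_Ico_sq_polyIntegral_gradMul_le hk a n L).trans ?_
  rw [mul_assoc, Finset.mul_sum _ _ (((k : ℝ) + 1) ^ 3)]
  refine mul_le_mul_of_nonneg_left (Finset.sum_le_sum fun j _ => ?_) (by positivity)
  have hj : (j : ℝ) * (j + 1) ≤ (j + 1) ^ 2 := by nlinarith [j.cast_nonneg (α := ℝ)]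
  calc ((j : ℝ) + 1) ^ (2 * s) * (((k : ℝ) + 1) ^ 3 * (j * (j + 1) * a j ^ 2))
      = ((k : ℝ) + 1) ^ 3 * (sobolevWeight s j * (j * (j + 1)) * a j ^ 2) := by
        rw [sobolevWeight]
        ring
    _ ≤ ((k : ℝ) + 1) ^ 3 * (sobolevWeight s j * (j + 1) ^ 2 * a j ^ 2) := by
        have := (sobolevWeight_pos s j).le
        gcongr
    _ = ((k : ℝ) + 1) ^ 3 * (sobolevWeight (s + 1) j * a j ^ 2) := by
        rw [sobolevWeight_add_one]

/-- The part of the product of the latitudinal derivatives of the Legendre expansions with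
coefficients `a` and `b`, over degrees less than `N`, in which the degree `j` of the first factor
and the degree `k` of the second satisfy `k + i ≤ j`. -/
def paraproduct (i N : ℕ) (a b : ℕ → ℝ) : ℝ[X] :=
  ∑ k ∈ Finset.range N,
    b k • gradMul (normalizedLegendre k) (legendreSum (Finset.Ico (k + i) N) a)

lemma gradMul_legendreSum_eq_paraproduct_add (N : ℕ) (a b : ℕ → ℝ) :
    gradMul (legendreSum (Finset.range N) a) (legendreSum (Finset.range N) b) =
      paraproduct 0 N a b + paraproduct 1 N b a := by
  have hsplit k (hk : k ∈ Finset.range N) : legendreSum (Finset.range N) b =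
      legendreSum (Finset.range (k + 1)) b + legendreSum (Finset.Ico (k + 1) N) b :=
    (Finset.sum_range_add_sum_Ico _ (Finset.mem_range.1 hk)).symm
  have hlow : ∑ j ∈ Finset.range N,
      a j • gradMul (normalizedLegendre j) (legendreSum (Finset.range (j + 1)) b) =
        paraproduct 0 N a b := by
    simp only [paraproduct, legendreSum, map_sum, map_smul, Finset.smul_sum]
    rw [Finset.sum_comm' (t' := Finset.range N) (s' := fun k => Finset.Ico (k + 0) N)
      fun j k => by simp only [Finset.mem_range, Finset.mem_Ico]; omega]
    simp only [gradMul_comm, smul_comm (a _)]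
  rw [← hlow, paraproduct, ← Finset.sum_add_distrib]
  conv_lhs => rw [legendreSum, map_sum, LinearMap.sum_apply]
  refine Finset.sum_congr rfl fun j hj => ?_
  rw [map_smul, LinearMap.smul_apply, ← smul_add, ← map_add, ← hsplit j hj]

/-- The constant `∑ (k + 1) ^ 3 / (k + 1) ^ (2 * s + 2)` produced by the Cauchy-Schwarz
inequality over the lower degree `k`. -/
def paraproductConst (s : ℝ) : ℝ := ∑' k : ℕ, ((k : ℝ) + 1) ^ 3 / sobolevWeight (s + 1) k

lemma cube_div_sobolevWeight (s : ℝ) (k : ℕ) :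
    ((k : ℝ) + 1) ^ 3 / sobolevWeight (s + 1) k = ((k : ℝ) + 1) ^ (1 - 2 * s) := by
  rw [sobolevWeight, ← Real.rpow_natCast, ← Real.rpow_sub (by positivity)]
  congr 1
  push_cast
  ring

lemma summable_cube_div_sobolevWeight {s : ℝ} (hs : 1 < s) :
    Summable fun k : ℕ => ((k : ℝ) + 1) ^ 3 / sobolevWeight (s + 1) k := by
  have h := (summable_nat_add_iff 1).2 (Real.summable_nat_rpow.2 (by linarith : 1 - 2 * s < -1))
  simpa only [cube_div_sobolevWeight, Nat.cast_add_one] using h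

lemma paraproductConst_pos {s : ℝ} (hs : 1 < s) : 0 < paraproductConst s := by
  have hterm (k : ℕ) : 0 < ((k : ℝ) + 1) ^ 3 / sobolevWeight (s + 1) k :=
    div_pos (by positivity) (sobolevWeight_pos _ _)
  exact (summable_cube_div_sobolevWeight hs).tsum_pos (fun k => (hterm k).le) 0 (hterm 0)

lemma sq_polyIntegral_paraproduct_mul_le (s : ℝ) (i N l : ℕ) (a b : ℕ → ℝ) :
    polyIntegral (paraproduct i N a b * normalizedLegendre l) ^ 2 ≤
      (∑ k ∈ Finset.range N, sobolevWeight (s + 1) k * b k ^ 2) *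
        ∑ k ∈ Finset.range N, (sobolevWeight (s + 1) k)⁻¹ * polyIntegral
          (gradMul (normalizedLegendre k) (legendreSum (Finset.Ico (k + i) N) a) *
            normalizedLegendre l) ^ 2 := by
  simp only [paraproduct, Finset.sum_mul _ _ (normalizedLegendre l), map_sum, smul_mul_assoc,
    map_smul, smul_eq_mul]
  refine Finset.sum_sq_le_sum_mul_sum_of_sq_le_mul _
    (fun k _ => mul_nonneg (sobolevWeight_pos _ k).le (sq_nonneg _))
    (fun k _ => mul_nonneg (inv_nonneg.2 (sobolevWeight_pos _ k).le) (sq_nonneg _))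
    fun k _ => le_of_eq ?_
  have := (sobolevWeight_pos (s + 1) k).ne'
  field_simp

lemma sum_sobolevWeight_mul_sq_polyIntegral_paraproduct_le {s : ℝ} (hs : 1 < s) (i N L : ℕ)
    (a b : ℕ → ℝ) :
    ∑ l ∈ Finset.range L, sobolevWeight s l *
        polyIntegral (paraproduct i N a b * normalizedLegendre l) ^ 2 ≤
      2 ^ (2 * s) * paraproductConst s *
        ((∑ j ∈ Finset.range N, sobolevWeight (s + 1) j * a j ^ 2) *
          ∑ k ∈ Finset.range N, sobolevWeight (s + 1) k * b k ^ 2) := by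
  set A := ∑ j ∈ Finset.range N, sobolevWeight (s + 1) j * a j ^ 2
  set B := ∑ k ∈ Finset.range N, sobolevWeight (s + 1) k * b k ^ 2
  set t : ℕ → ℕ → ℝ := fun k l => polyIntegral
    (gradMul (normalizedLegendre k) (legendreSum (Finset.Ico (k + i) N) a) * normalizedLegendre l)
  have hterm t u : 0 ≤ sobolevWeight t u := (sobolevWeight_pos t u).le
  have hA : 0 ≤ A := Finset.sum_nonneg fun j _ => mul_nonneg (hterm _ j) (sq_nonneg _)
  have hB : 0 ≤ B := Finset.sum_nonneg fun j _ => mul_nonneg (hterm _ j) (sq_nonneg _)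
  have hfixed k : ∑ l ∈ Finset.range L, sobolevWeight s l * t k l ^ 2 ≤
      2 ^ (2 * s) * ((k : ℝ) + 1) ^ 3 * A := by
    refine (sum_sobolevWeight_mul_sq_polyIntegral_gradMul_le (by linarith)
      (fun j hj => (Nat.le_add_right k i).trans (Finset.mem_Ico.1 hj).1) a L).trans ?_
    gcongr
    refine Finset.sum_le_sum_of_subset_of_nonneg ?_
      fun j _ _ => mul_nonneg (hterm _ j) (sq_nonneg _)
    exact fun j hj => Finset.mem_range.2 (Finset.mem_Ico.1 hj).2
  calc _ ≤ ∑ l ∈ Finset.range L, sobolevWeight s l *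
        (B * ∑ k ∈ Finset.range N, (sobolevWeight (s + 1) k)⁻¹ * t k l ^ 2) :=
        Finset.sum_le_sum fun l _ => mul_le_mul_of_nonneg_left
          (sq_polyIntegral_paraproduct_mul_le s i N l a b) (hterm s l)
    _ = B * ∑ k ∈ Finset.range N, (sobolevWeight (s + 1) k)⁻¹ *
        ∑ l ∈ Finset.range L, sobolevWeight s l * t k l ^ 2 := by
        simp only [Finset.mul_sum]
        rw [Finset.sum_comm]
        exact Finset.sum_congr rfl fun k _ => Finset.sum_congr rfl fun l _ => by ring
    _ ≤ B * ∑ k ∈ Finset.range N, (sobolevWeight (s + 1) k)⁻¹ *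
        (2 ^ (2 * s) * ((k : ℝ) + 1) ^ 3 * A) := by
        gcongr with k
        · exact inv_nonneg.2 (hterm _ k)
        · exact hfixed k
    _ = 2 ^ (2 * s) * (∑ k ∈ Finset.range N, ((k : ℝ) + 1) ^ 3 / sobolevWeight (s + 1) k) *
        (A * B) := by
        simp only [Finset.mul_sum, Finset.sum_mul]
        exact Finset.sum_congr rfl fun k _ => by ring
    _ ≤ 2 ^ (2 * s) * paraproductConst s * (A * B) := by
        gcongr
        exact (summable_cube_div_sobolevWeight hs).sum_le_tsum _
          fun k _ => div_nonneg (by positivity) (hterm _ k)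

/-- The squared constant of the product estimate for Legendre expansions. -/
def productConst (s : ℝ) : ℝ := 4 * (2 ^ (2 * s) * paraproductConst s)

lemma productConst_pos {s : ℝ} (hs : 1 < s) : 0 < productConst s := by
  have := paraproductConst_pos hs
  unfold productConst
  positivity

lemma sum_sobolevWeight_mul_sq_polyIntegral_gradMul_legendreSum_le {s : ℝ} (hs : 1 < s)
    (N L : ℕ) (a b : ℕ → ℝ) :
    ∑ l ∈ Finset.range L, sobolevWeight s l * polyIntegral
        (gradMul (legendreSum (Finset.range N) a) (legendreSum (Finset.range N) b) *
          normalizedLegendre l) ^ 2 ≤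
      productConst s *
        ((∑ j ∈ Finset.range N, sobolevWeight (s + 1) j * a j ^ 2) *
          ∑ k ∈ Finset.range N, sobolevWeight (s + 1) k * b k ^ 2) := by
  have hlow := sum_sobolevWeight_mul_sq_polyIntegral_paraproduct_le hs 0 N L a b
  have hhigh := sum_sobolevWeight_mul_sq_polyIntegral_paraproduct_le hs 1 N L b a
  calc _ ≤ ∑ l ∈ Finset.range L, 2 * (sobolevWeight s l *
          polyIntegral (paraproduct 0 N a b * normalizedLegendre l) ^ 2 + sobolevWeight s l *
          polyIntegral (paraproduct 1 N b a * normalizedLegendre l) ^ 2) := by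
        refine Finset.sum_le_sum fun l _ => ?_
        rw [gradMul_legendreSum_eq_paraproduct_add, add_mul, map_add, ← mul_add, mul_left_comm]
        exact mul_le_mul_of_nonneg_left add_sq_le (sobolevWeight_pos s l).le
    _ ≤ _ := by
        rw [← Finset.mul_sum, Finset.sum_add_distrib, productConst]
        linarith

end FiniteProductEstimate

section Completeness

open Polynomial

lemma integral_sq_le_of_forall_integral_mul_eval_eq_zero {a b : ℝ} (hab : a ≤ b) {g : ℝ → ℝ}
    (hg : ContinuousOn g (Set.Icc a b)) (h : ∀ p : ℝ[X], ∫ x in a..b, g x * p.eval x = 0)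
    {ε : ℝ} (hε : 0 < ε) : ∫ x in a..b, g x ^ 2 ≤ ε * ∫ x in a..b, |g x| := by
  obtain ⟨p, hp⟩ := exists_polynomial_near_of_continuousOn a b g hg ε hε
  have hg' : ContinuousOn g (Set.uIcc a b) := by rwa [Set.uIcc_of_le hab]
  have hsq : IntervalIntegrable (fun x => g x ^ 2) volume a b := (hg'.pow 2).intervalIntegrable
  have hmul : IntervalIntegrable (fun x => g x * p.eval x) volume a b :=
    (hg'.mul p.continuousOn).intervalIntegrable
  calc ∫ x in a..b, g x ^ 2
      = ∫ x in a..b, (g x ^ 2 - g x * p.eval x) := by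
        rw [intervalIntegral.integral_sub hsq hmul, h p, sub_zero]
    _ ≤ ∫ x in a..b, ε * |g x| := by
        refine intervalIntegral.integral_mono_on hab (hsq.sub hmul)
          (hg'.abs.intervalIntegrable.const_mul ε) fun x hx => ?_
        calc g x ^ 2 - g x * p.eval x = g x * (g x - p.eval x) := by ring
          _ ≤ |g x| * |g x - p.eval x| := (le_abs_self _).trans_eq (abs_mul _ _)
          _ ≤ |g x| * ε := by
            gcongr
            rw [abs_sub_comm]
            exact (hp x hx).le
          _ = ε * |g x| := mul_comm _ _
    _ = ε * ∫ x in a..b, |g x| := intervalIntegral.integral_const_mul _ _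

lemma eq_zero_of_forall_integral_mul_eval_eq_zero {a b : ℝ} (hab : a < b) {g : ℝ → ℝ}
    (hg : ContinuousOn g (Set.Icc a b)) (h : ∀ p : ℝ[X], ∫ x in a..b, g x * p.eval x = 0)
    {x : ℝ} (hx : x ∈ Set.Icc a b) : g x = 0 := by
  have hlim : Tendsto (fun ε => ε * ∫ x in a..b, |g x|) (nhdsWithin 0 (Set.Ioi 0)) (nhds 0) :=
    ((continuous_mul_const _).tendsto' 0 0 (zero_mul _)).mono_left nhdsWithin_le_nhds
  have hle : ∫ x in a..b, g x ^ 2 ≤ 0 := by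
    refine ge_of_tendsto hlim ?_
    filter_upwards [self_mem_nhdsWithin] with ε hε
    exact integral_sq_le_of_forall_integral_mul_eval_eq_zero hab.le hg h hε
  by_contra hne
  exact hle.not_gt <| intervalIntegral.integral_pos hab (hg.pow 2) (fun y _ => sq_nonneg _)
    ⟨x, hx, by positivity⟩

lemma forall_integral_mul_eval_eq_zero_of_normalizedLegendre {g : ℝ → ℝ} (hg : Continuous g)
    (h : ∀ l, ∫ x in (-1 : ℝ)..1, g x * (normalizedLegendre l).eval x = 0) (p : ℝ[X]) :
    ∫ x in (-1 : ℝ)..1, g x * p.eval x = 0 := by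
  have hp : p ∈ Submodule.span ℝ (Set.range legendreSequence) := by
    rw [legendreSequence.span isUnit_leadingCoeff_legendreSequence]
    trivial
  induction hp using Submodule.span_induction with
  | mem r hr =>
    obtain ⟨l, rfl⟩ := hr
    have hl := h l
    simp only [normalizedLegendre, eval_smul, smul_eq_mul, mul_left_comm (g _),
      intervalIntegral.integral_const_mul] at hl
    exact (mul_eq_zero.1 hl).resolve_left (by positivity)
  | zero => simp
  | add p r _ _ hp hr =>
    have hint (t : ℝ[X]) : IntervalIntegrable (fun x => g x * t.eval x) volume (-1) 1 :=
      (hg.mul t.continuous).intervalIntegrable _ _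
    simp only [eval_add, mul_add]
    rw [intervalIntegral.integral_add (hint p) (hint r), hp, hr, add_zero]
  | smul c p _ hp =>
    simp only [eval_smul, smul_eq_mul, mul_left_comm (g _), intervalIntegral.integral_const_mul,
      hp, mul_zero]

end Completeness

section LatitudeSeries

open Polynomial

/-- The profile of the `l`-th zonal harmonic in the latitude `θ`, normalized for the measure
`cos θ dθ`, so that `Y_l^0 = zonalHarmonic l / √(2π)`. -/
def zonalHarmonic (l : ℕ) (θ : ℝ) : ℝ := (normalizedLegendre l).eval (sin θ)

/-- The latitudinal derivative of `zonalHarmonic l`. -/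
def zonalHarmonicDeriv (l : ℕ) (θ : ℝ) : ℝ :=
  (derivative (normalizedLegendre l)).eval (sin θ) * cos θ

/-- A common uniform bound for `zonalHarmonic l` and `zonalHarmonicDeriv l`. -/
def zonalBound (l : ℕ) : ℝ := √(((l : ℝ) + 1) ^ 3)

/-- The coefficients of a function of the latitude in the orthonormal system `zonalHarmonic`. -/
def latCoeff (f : ℝ → ℝ) (l : ℕ) : ℝ :=
  ∫ θ in -(π / 2)..π / 2, f θ * zonalHarmonic l θ * cos θ

/-- The sum of the zonal series with coefficients `a`. -/
def zonalSeries (a : ℕ → ℝ) (θ : ℝ) : ℝ := ∑' l, a l * zonalHarmonic l θ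

/-- The latitudinal derivative, term by term, of the zonal series with coefficients `a`. -/
def zonalGradSeries (a : ℕ → ℝ) (θ : ℝ) : ℝ := ∑' l, a l * zonalHarmonicDeriv l θ

@[fun_prop]
lemma continuous_eval_sin (p : ℝ[X]) : Continuous fun θ => p.eval (sin θ) :=
  p.continuous.comp continuous_sin

lemma abs_zonalHarmonic_le (l : ℕ) (θ : ℝ) : |zonalHarmonic l θ| ≤ zonalBound l :=
  abs_le_sqrt <| (sq_eval_normalizedLegendre_le l (sin_mem_Icc θ)).trans <|
    le_self_pow₀ (by linarith [l.cast_nonneg (α := ℝ)]) three_ne_zero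

lemma abs_zonalHarmonicDeriv_le (l : ℕ) (θ : ℝ) : |zonalHarmonicDeriv l θ| ≤ zonalBound l := by
  refine abs_le_sqrt ?_
  rw [zonalHarmonicDeriv, mul_pow, cos_sq', mul_comm]
  exact one_sub_sq_mul_sq_eval_derivative_normalizedLegendre_le l (sin_mem_Icc θ)

@[fun_prop]
lemma continuous_zonalHarmonic (l : ℕ) : Continuous (zonalHarmonic l) :=
  continuous_eval_sin _

@[fun_prop]
lemma continuous_zonalHarmonicDeriv (l : ℕ) : Continuous (zonalHarmonicDeriv l) :=
  (continuous_eval_sin _).mul continuous_cos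

lemma hasDerivAt_zonalHarmonic (l : ℕ) (θ : ℝ) :
    HasDerivAt (zonalHarmonic l) (zonalHarmonicDeriv l θ) θ :=
  ((normalizedLegendre l).hasDerivAt (sin θ)).comp θ (hasDerivAt_sin θ)

lemma latCoeff_eq_integral_arcsin {f : ℝ → ℝ} (hf : Continuous f) (l : ℕ) :
    latCoeff f l = ∫ x in (-1 : ℝ)..1, f (arcsin x) * (normalizedLegendre l).eval x := by
  have hsubst := intervalIntegral.integral_comp_mul_deriv (a := -(π / 2)) (b := π / 2)
    (g := fun x => f (arcsin x) * (normalizedLegendre l).eval x)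
    (fun θ _ => hasDerivAt_sin θ) continuous_cos.continuousOn
    ((hf.comp continuous_arcsin).mul (normalizedLegendre l).continuous)
  rw [sin_neg, sin_pi_div_two] at hsubst
  rw [← hsubst]
  refine intervalIntegral.integral_congr fun θ hθ => ?_
  rw [Set.uIcc_of_le (by linarith [pi_pos])] at hθ
  simp [arcsin_sin hθ.1 hθ.2, zonalHarmonic]

lemma latCoeff_eval_sin (p : ℝ[X]) (l : ℕ) :
    latCoeff (fun θ => p.eval (sin θ)) l = polyIntegral (p * normalizedLegendre l) := by
  rw [latCoeff_eq_integral_arcsin (continuous_eval_sin p), polyIntegral_apply]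
  refine intervalIntegral.integral_congr fun x hx => ?_
  rw [Set.uIcc_of_le (by norm_num)] at hx
  simp [sin_arcsin hx.1 hx.2]

lemma latCoeff_sub {f g : ℝ → ℝ} (hf : Continuous f) (hg : Continuous g) (l : ℕ) :
    latCoeff (f - g) l = latCoeff f l - latCoeff g l := by
  have hint {h : ℝ → ℝ} (hh : Continuous h) : IntervalIntegrable
      (fun θ => h θ * zonalHarmonic l θ * cos θ) volume (-(π / 2)) (π / 2) :=
    Continuous.intervalIntegrable (by fun_prop) _ _
  simp only [latCoeff, Pi.sub_apply, sub_mul]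
  exact intervalIntegral.integral_sub (hint hf) (hint hg)

lemma eq_zero_of_latCoeff_eq_zero {f : ℝ → ℝ} (hf : Continuous f) (h : ∀ l, latCoeff f l = 0)
    {θ : ℝ} (hθ : θ ∈ Set.Icc (-(π / 2)) (π / 2)) : f θ = 0 := by
  have hg : Continuous fun x => f (arcsin x) := hf.comp continuous_arcsin
  simp only [latCoeff_eq_integral_arcsin hf] at h
  have hzero := eq_zero_of_forall_integral_mul_eval_eq_zero (by norm_num) hg.continuousOn
    (forall_integral_mul_eval_eq_zero_of_normalizedLegendre hg h) (sin_mem_Icc θ)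
  rwa [arcsin_sin hθ.1 hθ.2] at hzero

lemma tendsto_latCoeff {F : ℕ → ℝ → ℝ} {f : ℝ → ℝ} {B : ℝ} (hF : ∀ N, Continuous (F N))
    (hB : ∀ N θ, |F N θ| ≤ B) (hlim : ∀ θ, Tendsto (F · θ) atTop (nhds (f θ))) (l : ℕ) :
    Tendsto (fun N => latCoeff (F N) l) atTop (nhds (latCoeff f l)) := by
  refine intervalIntegral.tendsto_integral_filter_of_dominated_convergence
    (fun θ => B * |zonalHarmonic l θ * cos θ|)
    (.of_forall fun N => Continuous.aestronglyMeasurable (by fun_prop))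
    (.of_forall fun N => .of_forall fun θ _ => ?_)
    (Continuous.intervalIntegrable (by fun_prop) _ _)
    (.of_forall fun θ _ => ((hlim θ).mul_const _).mul_const _)
  rw [Real.norm_eq_abs, mul_assoc, abs_mul]
  gcongr
  exact hB N θ

section Series

variable {a b φ M : ℕ → ℝ}

lemma abs_mul_le_abs_mul {c x m : ℝ} (hx : |x| ≤ m) : |c * x| ≤ |c| * m :=
  (abs_mul c x).trans_le (mul_le_mul_of_nonneg_left hx (abs_nonneg c))

lemma summable_mul_of_abs_le (ha : Summable fun l => |a l| * M l) (hφ : ∀ l, |φ l| ≤ M l) :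
    Summable fun l => a l * φ l :=
  .of_norm_bounded ha fun l => abs_mul_le_abs_mul (hφ l)

lemma abs_sum_mul_le_tsum (ha : Summable fun l => |a l| * M l) (hφ : ∀ l, |φ l| ≤ M l)
    (S : Finset ℕ) : |∑ l ∈ S, a l * φ l| ≤ ∑' l, |a l| * M l :=
  calc |∑ l ∈ S, a l * φ l| ≤ ∑ l ∈ S, |a l * φ l| := Finset.abs_sum_le_sum_abs _ _
    _ ≤ ∑ l ∈ S, |a l| * M l := Finset.sum_le_sum fun l _ => abs_mul_le_abs_mul (hφ l)
    _ ≤ ∑' l, |a l| * M l := ha.sum_le_tsum S fun l _ =>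
      mul_nonneg (abs_nonneg _) ((abs_nonneg _).trans (hφ l))

lemma continuous_tsum_mul {φ : ℕ → ℝ → ℝ} (ha : Summable fun l => |a l| * M l)
    (hφ : ∀ l, Continuous (φ l)) (hM : ∀ l θ, |φ l θ| ≤ M l) :
    Continuous fun θ => ∑' l, a l * φ l θ :=
  continuous_tsum (fun l => (hφ l).const_mul (a l)) ha fun l θ => abs_mul_le_abs_mul (hM l θ)

lemma eval_legendreSum_sin (S : Finset ℕ) (a : ℕ → ℝ) (θ : ℝ) :
    (legendreSum S a).eval (sin θ) = ∑ l ∈ S, a l * zonalHarmonic l θ := by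
  simp [legendreSum, eval_finsetSum, zonalHarmonic]

lemma eval_gradMul_legendreSum_sin (S : Finset ℕ) (a b : ℕ → ℝ) (θ : ℝ) :
    (gradMul (legendreSum S a) (legendreSum S b)).eval (sin θ) =
      (∑ l ∈ S, a l * zonalHarmonicDeriv l θ) * ∑ l ∈ S, b l * zonalHarmonicDeriv l θ := by
  have heval (c : ℕ → ℝ) : ∑ l ∈ S, c l * zonalHarmonicDeriv l θ =
      (derivative (legendreSum S c)).eval (sin θ) * cos θ := by
    simp [legendreSum, eval_finsetSum, zonalHarmonicDeriv, Finset.sum_mul, mul_assoc]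
  rw [heval, heval, eval_gradMul, ← cos_sq']
  ring

lemma polyIntegral_legendreSum_mul_normalizedLegendre (S : Finset ℕ) (a : ℕ → ℝ) (l : ℕ) :
    polyIntegral (legendreSum S a * normalizedLegendre l) = if l ∈ S then a l else 0 := by
  simp [legendreSum, Finset.sum_mul, polyIntegral_normalizedLegendre_mul]

variable (ha : Summable fun l => |a l| * zonalBound l) (hb : Summable fun l => |b l| * zonalBound l)
include ha

lemma latCoeff_zonalSeries (l : ℕ) : latCoeff (zonalSeries a) l = a l := by
  have hlim : Tendsto (fun N => latCoeff
      (fun θ => (legendreSum (Finset.range N) a).eval (sin θ)) l) atTop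
      (nhds (latCoeff (zonalSeries a) l)) := by
    refine tendsto_latCoeff (B := ∑' l, |a l| * zonalBound l)
      (fun N => continuous_eval_sin (legendreSum (Finset.range N) a))
      (fun N θ => ?_) (fun θ => ?_) l
    · rw [eval_legendreSum_sin]
      exact abs_sum_mul_le_tsum ha (abs_zonalHarmonic_le · θ) _
    · simp only [eval_legendreSum_sin]
      exact (summable_mul_of_abs_le ha (abs_zonalHarmonic_le · θ)).hasSum.tendsto_sum_nat
  refine tendsto_nhds_unique (hlim.congr' ?_) tendsto_const_nhds
  filter_upwards [eventually_gt_atTop l] with N hN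
  rw [latCoeff_eval_sin, polyIntegral_legendreSum_mul_normalizedLegendre,
    if_pos (Finset.mem_range.2 hN)]

lemma hasDerivAt_zonalSeries (θ : ℝ) :
    HasDerivAt (zonalSeries a) (zonalGradSeries a θ) θ :=
  hasDerivAt_tsum ha (fun l θ => (hasDerivAt_zonalHarmonic l θ).const_mul (a l))
    (fun l θ => abs_mul_le_abs_mul (abs_zonalHarmonicDeriv_le l θ))
    (summable_mul_of_abs_le ha (abs_zonalHarmonic_le · 0)) θ

lemma continuous_zonalSeries : Continuous (zonalSeries a) :=
  continuous_tsum_mul ha continuous_zonalHarmonic abs_zonalHarmonic_le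

lemma continuous_zonalGradSeries : Continuous (zonalGradSeries a) :=
  continuous_tsum_mul ha continuous_zonalHarmonicDeriv abs_zonalHarmonicDeriv_le

include hb in
lemma tendsto_polyIntegral_gradMul_legendreSum (l : ℕ) :
    Tendsto (fun N => polyIntegral (gradMul (legendreSum (Finset.range N) a)
        (legendreSum (Finset.range N) b) * normalizedLegendre l)) atTop
      (nhds (latCoeff (fun θ => zonalGradSeries a θ * zonalGradSeries b θ) l)) := by
  simp only [← latCoeff_eval_sin]
  refine tendsto_latCoeff (B := (∑' l, |a l| * zonalBound l) * ∑' l, |b l| * zonalBound l)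
    (fun N => continuous_eval_sin
      (gradMul (legendreSum (Finset.range N) a) (legendreSum (Finset.range N) b)))
    (fun N θ => ?_) (fun θ => ?_) l
  · rw [eval_gradMul_legendreSum_sin, abs_mul]
    have hsum {c : ℕ → ℝ} (hc : Summable fun l => |c l| * zonalBound l) :=
      abs_sum_mul_le_tsum hc (abs_zonalHarmonicDeriv_le · θ) (Finset.range N)
    exact mul_le_mul (hsum ha) (hsum hb) (abs_nonneg _) ((abs_nonneg _).trans (hsum ha))
  · simp only [eval_gradMul_legendreSum_sin]
    have hsum {c : ℕ → ℝ} (hc : Summable fun l => |c l| * zonalBound l) :=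
      (summable_mul_of_abs_le hc (abs_zonalHarmonicDeriv_le · θ)).hasSum.tendsto_sum_nat
    exact (hsum ha).mul (hsum hb)

end Series

lemma eq_zonalSeries_latCoeff {f : ℝ → ℝ} (hf : Continuous f)
    (hsymm : ∀ θ, f (arcsin (sin θ)) = f θ)
    (hsum : Summable fun l => |latCoeff f l| * zonalBound l) : f = zonalSeries (latCoeff f) := by
  have hseries := continuous_zonalSeries hsum
  have hzero (θ : ℝ) (hθ : θ ∈ Set.Icc (-(π / 2)) (π / 2)) :
      f θ - zonalSeries (latCoeff f) θ = 0 :=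
    eq_zero_of_latCoeff_eq_zero (hf.sub hseries)
      (fun l => by rw [latCoeff_sub hf hseries, latCoeff_zonalSeries hsum, sub_self]) hθ
  funext θ
  have hsymm' : zonalSeries (latCoeff f) (arcsin (sin θ)) = zonalSeries (latCoeff f) θ := by
    simp only [zonalSeries, zonalHarmonic, sin_arcsin (neg_one_le_sin θ) (sin_le_one θ)]
  rw [← hsymm, ← hsymm', ← sub_eq_zero]
  exact hzero _ (arcsin_mem_Icc _)

end LatitudeSeries

section SobolevProduct

variable {s : ℝ} {a b : ℕ → ℝ}

lemma summable_abs_mul_zonalBound (hs : 1 < s)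
    (ha : Summable fun l => sobolevWeight (s + 1) l * a l ^ 2) :
    Summable fun l => |a l| * zonalBound l := by
  refine Summable.of_nonneg_of_le (fun l => mul_nonneg (abs_nonneg _) (sqrt_nonneg _))
    (fun l => ?_) (ha.add (summable_cube_div_sobolevWeight hs))
  have hw := sobolevWeight_pos (s + 1) l
  set w := sobolevWeight (s + 1) l
  have hbound : zonalBound l ^ 2 = ((l : ℝ) + 1) ^ 3 := sq_sqrt (by positivity)
  have hsplit : |a l| * zonalBound l = (√w * |a l|) * (zonalBound l / √w) := by
    field_simp
  have hAMGM := two_mul_le_add_sq (√w * |a l|) (zonalBound l / √w)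
  rw [mul_assoc, ← hsplit, mul_pow, div_pow, sq_sqrt hw.le, hbound, sq_abs] at hAMGM
  have hnonneg : 0 ≤ |a l| * zonalBound l := mul_nonneg (abs_nonneg _) (sqrt_nonneg _)
  linarith

lemma sobolevWeight_mul_sq_nonneg (s : ℝ) (a : ℕ → ℝ) (l : ℕ) :
    0 ≤ sobolevWeight s l * a l ^ 2 :=
  mul_nonneg (sobolevWeight_pos s l).le (sq_nonneg _)

variable (hs : 1 < s) (ha : Summable fun l => sobolevWeight (s + 1) l * a l ^ 2)
  (hb : Summable fun l => sobolevWeight (s + 1) l * b l ^ 2)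
include hs ha hb

lemma sum_sobolevWeight_mul_sq_latCoeff_zonalGradSeries_mul_le (L : ℕ) :
    ∑ l ∈ Finset.range L, sobolevWeight s l *
        latCoeff (fun θ => zonalGradSeries a θ * zonalGradSeries b θ) l ^ 2 ≤
      productConst s * ((∑' l, sobolevWeight (s + 1) l * a l ^ 2) *
        ∑' l, sobolevWeight (s + 1) l * b l ^ 2) := by
  refine le_of_tendsto' (tendsto_finsetSum _ fun l _ =>
    ((tendsto_polyIntegral_gradMul_legendreSum (summable_abs_mul_zonalBound hs ha)
      (summable_abs_mul_zonalBound hs hb) l).pow 2).const_mul _) fun N =>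
    (sum_sobolevWeight_mul_sq_polyIntegral_gradMul_legendreSum_le hs N L a b).trans ?_
  refine mul_le_mul_of_nonneg_left ?_ (productConst_pos hs).le
  exact mul_le_mul (ha.sum_le_tsum _ fun l _ => sobolevWeight_mul_sq_nonneg _ a l)
    (hb.sum_le_tsum _ fun l _ => sobolevWeight_mul_sq_nonneg _ b l)
    (Finset.sum_nonneg fun l _ => sobolevWeight_mul_sq_nonneg _ b l)
    (tsum_nonneg (sobolevWeight_mul_sq_nonneg _ a))

lemma summable_sobolevWeight_mul_sq_latCoeff_zonalGradSeries_mul :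
    Summable fun l => sobolevWeight s l *
      latCoeff (fun θ => zonalGradSeries a θ * zonalGradSeries b θ) l ^ 2 :=
  summable_of_sum_range_le (sobolevWeight_mul_sq_nonneg s _)
    (sum_sobolevWeight_mul_sq_latCoeff_zonalGradSeries_mul_le hs ha hb)

lemma tsum_sobolevWeight_mul_sq_latCoeff_zonalGradSeries_mul_le :
    ∑' l, sobolevWeight s l *
        latCoeff (fun θ => zonalGradSeries a θ * zonalGradSeries b θ) l ^ 2 ≤
      productConst s * ((∑' l, sobolevWeight (s + 1) l * a l ^ 2) *
        ∑' l, sobolevWeight (s + 1) l * b l ^ 2) :=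
  Real.tsum_le_of_sum_range_le (sobolevWeight_mul_sq_nonneg s _)
    (sum_sobolevWeight_mul_sq_latCoeff_zonalGradSeries_mul_le hs ha hb)

end SobolevProduct

section Zonal

/-- The function on the sphere, in latitude/longitude coordinates, with latitudinal profile `f`. -/
def zonal (f : ℝ → ℝ) (θ _φ : ℝ) : ℂ := f θ

lemma integral_conj_exp_int_mul (m : ℤ) :
    ∫ φ in Set.Ico (-π) π, (starRingEnd ℂ) (Complex.exp (Complex.I * m * φ)) =
      if m = 0 then ((2 * π : ℝ) : ℂ) else 0 := by
  have hconj (φ : ℝ) : (starRingEnd ℂ) (Complex.exp (Complex.I * m * φ)) =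
      Complex.exp (-Complex.I * m * φ) := by
    simp [← Complex.exp_conj]
  rw [integral_Ico_eq_integral_Ioc, ← intervalIntegral.integral_of_le (by linarith [pi_pos])]
  simp only [hconj]
  split_ifs with hm
  · simp [hm, two_mul]
  · rw [integral_exp_mul_complex (by simp [hm]), div_eq_zero_iff, sub_eq_zero,
      Complex.exp_eq_exp_iff_exists_int]
    exact .inl ⟨-m, by push_cast; ring⟩

lemma two_pi_mul_alphaY_zero (l : ℕ) : 2 * π * alphaY l 0 = √(2 * π) * √((2 * l + 1) / 2) := by
  have hfact : (l.factorial : ℝ) ≠ 0 := by exact_mod_cast l.factorial_ne_zero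
  have hα : alphaY l 0 = √((2 * l + 1) / 2) / √(2 * π) := by
    rw [← sqrt_div (by positivity)]
    simp only [alphaY, abs_zero, add_zero, Int.zero_ediv, zpow_zero, one_mul, Int.natAbs_zero,
      Nat.sub_zero]
    congr 1
    field_simp
    ring
  rw [hα]
  nth_rw 1 [← mul_self_sqrt two_pi_pos.le]
  field_simp

lemma flCoeff_zonal (f : ℝ → ℝ) (l : ℕ) (m : ℤ) :
    flCoeff (zonal f) l m = if m = 0 then ((√(2 * π) * latCoeff f l : ℝ) : ℂ) else 0 := by
  have hsplit (p : ℝ × ℝ) : (ENNReal.ofReal (cos p.1)).toReal •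
      (zonal f p.1 p.2 * (starRingEnd ℂ) (Ylm l m p.1 p.2)) =
      (((ENNReal.ofReal (cos p.1)).toReal *
        (f p.1 * (alphaY l m * assocLegendre l m.natAbs (sin p.1))) : ℝ) : ℂ) *
        (starRingEnd ℂ) (Complex.exp (Complex.I * m * p.2)) := by
    rw [zonal, Ylm, map_mul, Complex.conj_ofReal, Complex.real_smul]
    push_cast
    ring
  rw [flCoeff, sphereMeasure, integral_withDensity_eq_integral_toReal_smul (by fun_prop)
    (.of_forall fun _ => ENNReal.ofReal_lt_top)]
  simp only [hsplit]
  rw [Measure.volume_eq_prod, setIntegral_prod_mul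
    (fun θ => (((ENNReal.ofReal (cos θ)).toReal *
      (f θ * (alphaY l m * assocLegendre l m.natAbs (sin θ))) : ℝ) : ℂ))
    (fun φ : ℝ => (starRingEnd ℂ) (Complex.exp (Complex.I * m * φ))), integral_conj_exp_int_mul]
  split_ifs with hm
  · subst hm
    rw [integral_complex_ofReal, ← Complex.ofReal_mul, integral_Icc_eq_integral_Ioc,
      ← intervalIntegral.integral_of_le (by linarith [pi_pos]), latCoeff,
      ← intervalIntegral.integral_mul_const, ← intervalIntegral.integral_const_mul]
    congr 1
    refine intervalIntegral.integral_congr fun θ hθ => ?_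
    rw [Set.uIcc_of_le (by linarith [pi_pos])] at hθ
    have hα := two_pi_mul_alphaY_zero l
    simp only [ENNReal.toReal_ofReal (cos_nonneg_of_mem_Icc hθ), zonalHarmonic,
      normalizedLegendre, Polynomial.eval_smul, smul_eq_mul, assocLegendre, Int.natAbs_zero,
      pow_zero, Nat.cast_zero, zero_div, rpow_zero, Function.iterate_zero, id]
    linear_combination (cos θ * f θ * (legendreP l).eval (sin θ)) * hα
  · rw [mul_zero]

lemma sobolevTerm_zonal_eq_zero (s : ℝ) (f : ℝ → ℝ) {p : ℕ × ℤ}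
    (hp : p ∉ Set.range fun l : ℕ => (l, (0 : ℤ))) :
    ((p.1 : ℝ) + 1) ^ (2 * s) * ‖flCoeff (zonal f) p.1 p.2‖ ^ 2 = 0 := by
  have hne : p.2 ≠ 0 := fun h => hp ⟨p.1, Prod.ext rfl h.symm⟩
  simp [flCoeff_zonal, hne]

lemma sobolevTerm_zonal_zero (s : ℝ) (f : ℝ → ℝ) (l : ℕ) :
    ((l : ℝ) + 1) ^ (2 * s) * ‖flCoeff (zonal f) l 0‖ ^ 2 =
      2 * π * (sobolevWeight s l * latCoeff f l ^ 2) := by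
  rw [flCoeff_zonal, if_pos rfl, Complex.norm_real, norm_eq_abs, sq_abs, mul_pow,
    sq_sqrt two_pi_pos.le, sobolevWeight]
  ring

lemma summable_sobolevTerm_zonal_iff (s : ℝ) (f : ℝ → ℝ) :
    (Summable fun p : ℕ × ℤ => ((p.1 : ℝ) + 1) ^ (2 * s) * ‖flCoeff (zonal f) p.1 p.2‖ ^ 2) ↔
      Summable fun l => sobolevWeight s l * latCoeff f l ^ 2 := by
  rw [← (Prod.mk_left_injective (0 : ℤ)).summable_iff fun p hp => sobolevTerm_zonal_eq_zero s f hp]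
  simp only [Function.comp_def, sobolevTerm_zonal_zero]
  exact summable_mul_left_iff two_pi_pos.ne'

lemma HsNorm_zonal (s : ℝ) (f : ℝ → ℝ) :
    HsNorm s (zonal f) = √(2 * π * ∑' l, sobolevWeight s l * latCoeff f l ^ 2) := by
  have hsupp : Function.support (fun p : ℕ × ℤ =>
      ((p.1 : ℝ) + 1) ^ (2 * s) * ‖flCoeff (zonal f) p.1 p.2‖ ^ 2) ⊆
      Set.range fun l : ℕ => (l, (0 : ℤ)) :=
    fun p hp => by_contra fun hmem => hp (sobolevTerm_zonal_eq_zero s f hmem)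
  rw [HsNorm, ← (Prod.mk_left_injective (0 : ℤ)).tsum_eq hsupp, ← tsum_mul_left]
  simp only [sobolevTerm_zonal_zero]

instance : IsFiniteMeasure sphereMeasure := by
  have : IsFiniteMeasure ((volume : Measure (ℝ × ℝ)).restrict
      (Set.Icc (-(π / 2)) (π / 2) ×ˢ Set.Ico (-π) π)) := by
    refine isFiniteMeasure_restrict.2 ?_
    simp [Measure.volume_eq_prod, Measure.prod_prod, ENNReal.mul_eq_top]
  exact isFiniteMeasure_withDensity_ofReal <|
    HasFiniteIntegral.of_bounded (C := 1) (.of_forall fun p => abs_cos_le_one _)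

lemma ae_sphereMeasure_fst_mem_Icc :
    ∀ᵐ p ∂sphereMeasure, p.1 ∈ Set.Icc (-(π / 2)) (π / 2) := by
  have hbox := ae_restrict_mem (μ := (volume : Measure (ℝ × ℝ)))
    (measurableSet_Icc.prod measurableSet_Ico :
      MeasurableSet (Set.Icc (-(π / 2)) (π / 2) ×ˢ Set.Ico (-π) π))
  filter_upwards [(withDensity_absolutelyContinuous _ _).ae_le hbox] with p hp using hp.1

lemma memLp_zonal {f : ℝ → ℝ} (hf : Continuous f) :
    MemLp (fun p : ℝ × ℝ => zonal f p.1 p.2) 2 sphereMeasure := by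
  obtain ⟨B, hB⟩ := isCompact_Icc.exists_bound_of_continuousOn
    (s := Set.Icc (-(π / 2)) (π / 2)) hf.continuousOn
  have hcont : Continuous fun p : ℝ × ℝ => zonal f p.1 p.2 :=
    Complex.continuous_ofReal.comp (hf.comp continuous_fst)
  refine .of_bound hcont.aestronglyMeasurable B ?_
  filter_upwards [ae_sphereMeasure_fst_mem_Icc] with p hp
  exact (Complex.norm_real _).trans_le (hB _ hp)

lemma memHs_zonal_iff {f : ℝ → ℝ} (hf : Continuous f) (s : ℝ) :
    MemHs s (zonal f) ↔ Summable fun l => sobolevWeight s l * latCoeff f l ^ 2 :=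
  (and_iff_right (memLp_zonal hf)).trans (summable_sobolevTerm_zonal_iff s f)

lemma axial_zonal (f : ℝ → ℝ) : Axial (zonal f) := fun _ _ _ => rfl

end Zonal

section AxialTrace

/-- The profile of `u` along the meridian of longitude zero. -/
def meridianProfile (u : EuclideanSpace ℝ (Fin 3) → ℝ) (θ : ℝ) : ℝ := u (sphCoord θ 0)

lemma sphCoord_mem_sphere (θ φ : ℝ) :
    sphCoord θ φ ∈ Metric.sphere (0 : EuclideanSpace ℝ (Fin 3)) 1 := by
  have hsq : ‖sphCoord θ φ‖ ^ 2 = 1 := by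
    rw [EuclideanSpace.norm_sq_eq, Fin.sum_univ_three]
    simp only [sphCoord, WithLp.equiv_symm_apply_ofLp, Matrix.cons_val, norm_eq_abs, sq_abs]
    linear_combination cos θ ^ 2 * sin_sq_add_cos_sq φ + sin_sq_add_cos_sq θ
  rwa [mem_sphere_zero_iff_norm, ← pow_eq_one_iff_of_nonneg (norm_nonneg _) two_ne_zero]

lemma continuous_sphCoord (φ : ℝ) : Continuous fun θ => sphCoord θ φ := by
  refine (PiLp.continuous_toLp 2 _).comp (continuous_pi fun i => ?_)
  fin_cases i
  · exact continuous_cos.mul_const _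
  · exact continuous_cos.mul_const _
  · exact continuous_sin

lemma sphCoord_arcsin_sin (θ : ℝ) :
    sphCoord (arcsin (sin θ)) 0 = sphCoord θ 0 ∨ sphCoord (arcsin (sin θ)) 0 = sphCoord θ π := by
  have hsin : sin (arcsin (sin θ)) = sin θ := sin_arcsin (neg_one_le_sin θ) (sin_le_one θ)
  have hcos : cos (arcsin (sin θ)) = |cos θ| := by
    rw [cos_arcsin, ← cos_sq', sqrt_sq_eq_abs]
  rcases abs_choice (cos θ) with h | h
  · exact .inl (by simp [sphCoord, hsin, hcos, h])
  · exact .inr (by simp [sphCoord, hsin, hcos, h])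

variable {u : EuclideanSpace ℝ (Fin 3) → ℝ}

lemma continuous_meridianProfile (hu : ContinuousOn u (Metric.sphere 0 1)) :
    Continuous (meridianProfile u) :=
  hu.comp_continuous (continuous_sphCoord 0) fun θ => sphCoord_mem_sphere θ 0

lemma traceR_eq_zonal (hu : Axial (traceR u)) : traceR u = zonal (meridianProfile u) :=
  funext₂ fun θ φ => hu θ φ 0

lemma apply_sphCoord_eq_meridianProfile (hu : Axial (traceR u)) (θ φ : ℝ) :
    u (sphCoord θ φ) = meridianProfile u θ :=
  Complex.ofReal_injective (hu θ φ 0)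

lemma meridianProfile_arcsin_sin (hu : Axial (traceR u)) (θ : ℝ) :
    meridianProfile u (arcsin (sin θ)) = meridianProfile u θ := by
  rcases sphCoord_arcsin_sin θ with h | h
  · rw [meridianProfile, h, meridianProfile]
  · rw [meridianProfile, h, apply_sphCoord_eq_meridianProfile hu]

lemma thetaDeriv_eq_zonalGradSeries (hc : ContinuousOn u (Metric.sphere 0 1))
    (hu : Axial (traceR u))
    (hsum : Summable fun l => |latCoeff (meridianProfile u) l| * zonalBound l) (θ φ : ℝ) :
    thetaDeriv u θ φ = zonalGradSeries (latCoeff (meridianProfile u)) θ := by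
  have hseries := eq_zonalSeries_latCoeff (continuous_meridianProfile hc)
    (meridianProfile_arcsin_sin hu) hsum
  simp only [thetaDeriv, apply_sphCoord_eq_meridianProfile hu]
  rw [← (hasDerivAt_zonalSeries hsum θ).deriv]
  exact congrArg (deriv · θ) hseries

lemma summable_sobolevWeight_mul_sq_latCoeff_meridianProfile {s : ℝ}
    (hc : ContinuousOn u (Metric.sphere 0 1)) (hm : MemHs s (traceR u)) (hu : Axial (traceR u)) :
    Summable fun l => sobolevWeight s l * latCoeff (meridianProfile u) l ^ 2 := by
  rw [traceR_eq_zonal hu] at hm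
  exact (memHs_zonal_iff (continuous_meridianProfile hc) s).1 hm

end AxialTrace

section ProductEstimate

variable {s : ℝ} {a b : ℕ → ℝ} (hs : 1 < s)
  (ha : Summable fun l => sobolevWeight (s + 1) l * a l ^ 2)
  (hb : Summable fun l => sobolevWeight (s + 1) l * b l ^ 2)
include hs ha hb

lemma memHs_zonal_zonalGradSeries_mul :
    MemHs s (zonal fun θ => zonalGradSeries a θ * zonalGradSeries b θ) :=
  (memHs_zonal_iff ((continuous_zonalGradSeries (summable_abs_mul_zonalBound hs ha)).mul
    (continuous_zonalGradSeries (summable_abs_mul_zonalBound hs hb))) s).2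
    (summable_sobolevWeight_mul_sq_latCoeff_zonalGradSeries_mul hs ha hb)

lemma HsNorm_zonal_zonalGradSeries_mul_le :
    HsNorm s (zonal fun θ => zonalGradSeries a θ * zonalGradSeries b θ) ≤
      √(productConst s / (2 * π)) * √(2 * π * ∑' l, sobolevWeight (s + 1) l * a l ^ 2) *
        √(2 * π * ∑' l, sobolevWeight (s + 1) l * b l ^ 2) := by
  have hK := productConst_pos hs
  have hA : 0 ≤ ∑' l, sobolevWeight (s + 1) l * a l ^ 2 :=
    tsum_nonneg (sobolevWeight_mul_sq_nonneg _ a)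
  rw [HsNorm_zonal, ← sqrt_mul (by positivity), ← sqrt_mul (by positivity)]
  refine sqrt_le_sqrt ?_
  calc 2 * π * ∑' l, sobolevWeight s l *
        latCoeff (fun θ => zonalGradSeries a θ * zonalGradSeries b θ) l ^ 2
      ≤ 2 * π * (productConst s * ((∑' l, sobolevWeight (s + 1) l * a l ^ 2) *
          ∑' l, sobolevWeight (s + 1) l * b l ^ 2)) :=
        mul_le_mul_of_nonneg_left
          (tsum_sobolevWeight_mul_sq_latCoeff_zonalGradSeries_mul_le hs ha hb) two_pi_pos.le
    _ = productConst s / (2 * π) * (2 * π * ∑' l, sobolevWeight (s + 1) l * a l ^ 2) *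
          (2 * π * ∑' l, sobolevWeight (s + 1) l * b l ^ 2) := by
        field_simp

end ProductEstimate

lemma sphere_subset_closedExt : Metric.sphere 0 1 ⊆ closedExt :=
  fun _ hx => (mem_sphere_zero_iff_norm.1 hx).ge

theorem latitudinal_derivative_product_estimate_general (s : ℝ) (hs : 1 < s) :
    ∃ C > 0, ∀ u v : EuclideanSpace ℝ (Fin 3) → ℝ,
      ContinuousOn u (Metric.sphere 0 1) → MemHs (s + 1) (traceR u) → Axial (traceR u) →
      ContinuousOn v (Metric.sphere 0 1) → MemHs (s + 1) (traceR v) → Axial (traceR v) →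
      MemHs s (fun θ φ => ((thetaDeriv u θ φ * thetaDeriv v θ φ : ℝ) : ℂ)) ∧
      Axial (fun θ φ => ((thetaDeriv u θ φ * thetaDeriv v θ φ : ℝ) : ℂ)) ∧
      HsNorm s (fun θ φ => ((thetaDeriv u θ φ * thetaDeriv v θ φ : ℝ) : ℂ)) ≤
        C * HsNorm (s + 1) (traceR u) * HsNorm (s + 1) (traceR v) := by
  refine ⟨√(productConst s / (2 * π)), sqrt_pos.2 (div_pos (productConst_pos hs) two_pi_pos),
    fun u v hcu hmu hau hcv hmv hav => ?_⟩
  have hsu := summable_sobolevWeight_mul_sq_latCoeff_meridianProfile hcu hmu hau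
  have hsv := summable_sobolevWeight_mul_sq_latCoeff_meridianProfile hcv hmv hav
  have hprod : (fun θ φ => ((thetaDeriv u θ φ * thetaDeriv v θ φ : ℝ) : ℂ)) =
      zonal fun θ => zonalGradSeries (latCoeff (meridianProfile u)) θ *
        zonalGradSeries (latCoeff (meridianProfile v)) θ := by
    funext θ φ
    rw [thetaDeriv_eq_zonalGradSeries hcu hau (summable_abs_mul_zonalBound hs hsu),
      thetaDeriv_eq_zonalGradSeries hcv hav (summable_abs_mul_zonalBound hs hsv), zonal]
  rw [hprod, traceR_eq_zonal hau, traceR_eq_zonal hav, HsNorm_zonal (s + 1), HsNorm_zonal (s + 1)]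
  exact ⟨memHs_zonal_zonalGradSeries_mul hs hsu hsv, axial_zonal _,
    HsNorm_zonal_zonalGradSeries_mul_le hs hsu hsv⟩

/-- Lemma 2.7: if `u, v` are harmonic in the exterior of the unit
sphere, continuous up to the sphere, vanish at infinity, and have traces in
`H^{s+1}_ax(𝕊)` with `s > 1`, then `u_θ v_θ ∈ H^s_ax(𝕊)` with
`‖u_θ v_θ‖_{H^s} ≤ C ‖u‖_{H^{s+1}} ‖v‖_{H^{s+1}}`. -/
theorem latitudinal_derivative_product_estimate (s : ℝ) (hs : 1 < s) :
    ∃ C > 0, ∀ u v : EuclideanSpace ℝ (Fin 3) → ℝ,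
      ContDiffOn ℝ 2 u extDomain → (∀ x ∈ extDomain, lap u x = 0) →
      ContinuousOn u closedExt → Filter.Tendsto u (Bornology.cobounded _) (nhds 0) →
      MemHs (s + 1) (traceR u) → Axial (traceR u) →
      ContDiffOn ℝ 2 v extDomain → (∀ x ∈ extDomain, lap v x = 0) →
      ContinuousOn v closedExt → Filter.Tendsto v (Bornology.cobounded _) (nhds 0) →
      MemHs (s + 1) (traceR v) → Axial (traceR v) →
      MemHs s (fun θ φ => ((thetaDeriv u θ φ * thetaDeriv v θ φ : ℝ) : ℂ)) ∧
      Axial (fun θ φ => ((thetaDeriv u θ φ * thetaDeriv v θ φ : ℝ) : ℂ)) ∧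
      HsNorm s (fun θ φ => ((thetaDeriv u θ φ * thetaDeriv v θ φ : ℝ) : ℂ)) ≤
        C * HsNorm (s + 1) (traceR u) * HsNorm (s + 1) (traceR v) := by
  obtain ⟨C, hC, h⟩ := latitudinal_derivative_product_estimate_general s hs
  exact ⟨C, hC, fun u v _ _ hcu _ hmu hau _ _ hcv _ hmv hav =>
    h u v (hcu.mono sphere_subset_closedExt) hmu hau (hcv.mono sphere_subset_closedExt) hmv hav⟩

end
end

section
/- For all nonnegative integers i, j, l, one has 2∫_{−1}^{1} (1 − z²) P_i′(z) P_j′(z) P_l(z) dz = [i(i+1) + j(j+1) − l(l+1)] ∫_{−1}^{1} P_i(z) P_j(z) P_l(z) dz, where P_n denotes the Legendre polynomial of degree n. -/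
noncomputable section

open MeasureTheory Real Filter

/-!
Write `L f = (w f')'` with `w = 1 - z²`, so that `P_n` is an eigenfunction of `L` with eigenvalue
`-n(n+1)`. The product rule `L (f g) = (L f) g + f (L g) + 2 w f' g'` expresses `2 w P_i' P_j'`
through `L (P_i P_j)`, and since `w` vanishes at `±1` the operator `L` is symmetric on `[-1, 1]`,
so in the integral against `P_l` it can be moved from `P_i P_j` to `P_l`.

The eigenvalue equation comes from Rodrigues' formula: `u = (z² - 1)^n` satisfies
`(1 - z²) u' = -2 n z u`, and differentiating this `n + 1` times yields Legendre's equation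
for the `n`-th derivative of `u`.
-/

section SturmLiouville

open Polynomial

section CommSemiring

variable {R : Type*} [CommSemiring R]

/-- The Sturm–Liouville operator `f ↦ (w f')'` with weight `w`, as a linear endomorphism of the
polynomials; Legendre's differential operator is the case `w = 1 - X ^ 2`. -/
def sturmLiouville (w : R[X]) : R[X] →ₗ[R] R[X] :=
  derivative ∘ₗ LinearMap.mulLeft R w ∘ₗ derivative

theorem sturmLiouville_apply (w f : R[X]) :
    sturmLiouville w f = derivative (w * derivative f) :=
  rfl

theorem sturmLiouville_mul (w f g : R[X]) :
    sturmLiouville w (f * g) = sturmLiouville w f * g + f * sturmLiouville w g +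
      2 * (w * derivative f * derivative g) := by
  simp only [sturmLiouville_apply, derivative_mul, derivative_add]
  ring

end CommSemiring

section CommRing

variable {R : Type*} [CommRing R]

theorem derivative_mul_wronskian (w f g : R[X]) :
    derivative (w * wronskian f g) = f * sturmLiouville w g - sturmLiouville w f * g := by
  simp only [wronskian, sturmLiouville_apply, derivative_mul, derivative_sub]
  ring

theorem iterate_derivative_one_sub_X_sq_mul_derivative (f : R[X]) (n : ℕ) :
    derivative^[n + 1] ((1 - X ^ 2) * derivative f) =
      sturmLiouville (1 - X ^ 2) (derivative^[n] f) -
        2 * (n : R[X]) * X * derivative^[n + 1] f -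
        (n : R[X]) * ((n : R[X]) + 1) * derivative^[n] f := by
  induction n with
  | zero => simp [sturmLiouville_apply]
  | succ n ih =>
    rw [Function.iterate_succ_apply', ih]
    simp only [sturmLiouville_apply, derivative_mul, derivative_sub, derivative_zero,
      derivative_one, derivative_X_sq, derivative_X, derivative_natCast, derivative_ofNat,
      derivative_add, Function.iterate_succ_apply', C_ofNat]
    push_cast
    ring

theorem one_sub_X_sq_mul_derivative_X_sq_sub_one_pow (n : ℕ) :
    (1 - X ^ 2 : R[X]) * derivative ((X ^ 2 - 1) ^ n) =
      (-(2 * n) : R) • ((X ^ 2 - 1) ^ n * X) := by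
  cases n with
  | zero => simp
  | succ n =>
    rw [derivative_pow_succ, derivative_sub, derivative_X_sq, derivative_one, smul_eq_C_mul]
    simp only [C_neg, C_mul, C_add, C_1, C_ofNat, map_natCast]
    push_cast
    ring

theorem sturmLiouville_iterate_derivative_X_sq_sub_one_pow (n : ℕ) :
    sturmLiouville (1 - X ^ 2) (derivative^[n] ((X ^ 2 - 1 : R[X]) ^ n)) =
      (-(n * (n + 1)) : R) • derivative^[n] ((X ^ 2 - 1) ^ n) := by
  set u : R[X] := (X ^ 2 - 1) ^ n
  have differentiated : derivative^[n + 1] ((1 - X ^ 2) * derivative u) =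
      (-(2 * n) : R) • (derivative^[n + 1] u * X + (n + 1) • derivative^[n] u) := by
    rw [one_sub_X_sq_mul_derivative_X_sq_sub_one_pow, iterate_derivative_smul,
      iterate_derivative_mul_X, Nat.add_sub_cancel]
  rw [iterate_derivative_one_sub_X_sq_mul_derivative] at differentiated
  simp only [smul_eq_C_mul, nsmul_eq_mul, C_neg, C_mul, C_add, C_1, C_ofNat, map_natCast,
    Nat.cast_succ] at differentiated ⊢
  linear_combination differentiated

end CommRing

section Integral

theorem integral_eval_derivative (f : ℝ[X]) (a b : ℝ) :
    ∫ z in a..b, (derivative f).eval z = f.eval b - f.eval a :=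
  intervalIntegral.integral_eq_sub_of_hasDerivAt (fun z _ ↦ f.hasDerivAt z)
    ((derivative f).continuous.intervalIntegrable a b)

variable {a b : ℝ}

theorem integral_sturmLiouville_mul_comm {w : ℝ[X]} (ha : w.IsRoot a) (hb : w.IsRoot b)
    (f g : ℝ[X]) :
    ∫ z in a..b, (sturmLiouville w f * g).eval z =
      ∫ z in a..b, (f * sturmLiouville w g).eval z := by
  have green : ∫ z in a..b, (f * sturmLiouville w g - sturmLiouville w f * g).eval z = 0 := by
    rw [← derivative_mul_wronskian, integral_eval_derivative]
    simp [ha.eq_zero, hb.eq_zero]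
  simp only [eval_sub] at green
  rw [intervalIntegral.integral_sub ((Polynomial.continuous _).intervalIntegrable a b)
    ((Polynomial.continuous _).intervalIntegrable a b)] at green
  exact (sub_eq_zero.mp green).symm

theorem integral_mul_derivative_mul_derivative_mul_of_sturmLiouville_eq_smul
    {w p q r : ℝ[X]} (ha : w.IsRoot a) (hb : w.IsRoot b) {α β γ : ℝ}
    (hp : sturmLiouville w p = α • p) (hq : sturmLiouville w q = β • q)
    (hr : sturmLiouville w r = γ • r) :
    2 * ∫ z in a..b, (w * derivative p * derivative q * r).eval z =
      (γ - α - β) * ∫ z in a..b, (p * q * r).eval z := by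
  have product_rule : sturmLiouville w (p * q) * r =
      (α + β) • (p * q * r) + (2 : ℝ) • (w * derivative p * derivative q * r) := by
    rw [sturmLiouville_mul, hp, hq]
    simp only [smul_eq_C_mul, C_add, C_ofNat]
    ring
  have symmetry := integral_sturmLiouville_mul_comm ha hb (p * q) r
  rw [product_rule, hr, mul_smul_comm] at symmetry
  simp only [eval_add, eval_smul, smul_eq_mul] at symmetry
  rw [intervalIntegral.integral_add
    ((Polynomial.continuous _).intervalIntegrable a b |>.const_mul _)
    ((Polynomial.continuous _).intervalIntegrable a b |>.const_mul _)] at symmetry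
  simp only [intervalIntegral.integral_const_mul] at symmetry
  linear_combination symmetry

end Integral

theorem sturmLiouville_legendreP (n : ℕ) :
    sturmLiouville (1 - X ^ 2) (legendreP n) = (-(n * (n + 1)) : ℝ) • legendreP n := by
  rw [legendreP, ← smul_eq_C_mul, map_smul, sturmLiouville_iterate_derivative_X_sq_sub_one_pow,
    smul_comm]

end SturmLiouville

/-- Legendre polynomial identity:
`2∫_{-1}^{1} (1-z²) P_i'(z) P_j'(z) P_l(z) dz
  = [i(i+1) + j(j+1) - l(l+1)] ∫_{-1}^{1} P_i(z) P_j(z) P_l(z) dz`. -/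
theorem legendre_derivative_product_integral_identity (i j l : ℕ) :
    2 * ∫ z in (-1 : ℝ)..1, (1 - z ^ 2) * (Polynomial.derivative (legendreP i)).eval z *
        (Polynomial.derivative (legendreP j)).eval z * (legendreP l).eval z =
      ((i : ℝ) * ((i : ℝ) + 1) + (j : ℝ) * ((j : ℝ) + 1) - (l : ℝ) * ((l : ℝ) + 1)) *
        ∫ z in (-1 : ℝ)..1,
          (legendreP i).eval z * (legendreP j).eval z * (legendreP l).eval z := by
  have triple_product := integral_mul_derivative_mul_derivative_mul_of_sturmLiouville_eq_smul
    (a := -1) (b := 1) (w := 1 - Polynomial.X ^ 2) (by simp) (by simp)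
    (sturmLiouville_legendreP i) (sturmLiouville_legendreP j) (sturmLiouville_legendreP l)
  simp only [Polynomial.eval_mul, Polynomial.eval_sub, Polynomial.eval_one, Polynomial.eval_pow,
    Polynomial.eval_X] at triple_product
  rw [triple_product]
  ring

end
end

section
/- There are positive constants c and C such that for all integers m and all nonnegative integers k: c · ((|m|+2k+1)/(2k+1))^{1/4} ≤ (−1)^{(|m|−m)/2 + k} α_{|m|+2k}^m P_{|m|+2k}^{|m|}(0) ≤ C · ((|m|+2k+1)/(2k+1))^{1/4}. -/
noncomputable section

open MeasureTheory Real Filter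

/-!
Up to sign, `P_{m+2k}^m(0) = (2m+2k-1)‼ / (2k)‼`. In the square of `α_{m+2k}^m P_{m+2k}^m(0)`, the
factor `(2k)! / (2m+2k)!` coming from `α` splits into double factorials and turns this into
`(2(m+2k)+1) / (4π) * w k * w (m+k)` with `w n = (2n-1)‼ / (2n)‼`. The Wallis product gives
`w n ^ 2 ≍ 1 / (2n+1)`, so the fourth power of `α P` is comparable to
`(m+2k+1)² / ((2k+1)(2m+2k+1))`, hence to `(m+2k+1) / (2k+1)`.
-/

section WallisRatio

open scoped Nat

theorem two_mul_factorial_eq_mul_doubleFactorial (n : ℕ) :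
    (2 * n)! = (2 * n)‼ * (2 * n - 1)‼ := by
  cases n with
  | zero => rfl
  | succ n => exact Nat.factorial_eq_mul_doubleFactorial (2 * n + 1)

/-- The ratio `(2n-1)‼ / (2n)‼`, i.e. the central binomial coefficient `(2n choose n)` divided by
`4 ^ n`. At `n = 0` the truncated `2 * 0 - 1 = 0` still gives the conventional `(-1)‼ = 1`. -/
def wallisRatio (n : ℕ) : ℝ := (2 * n - 1)‼ / (2 * n)‼

theorem wallisRatio_sq_eq_inv (n : ℕ) :
    wallisRatio n ^ 2 = ((2 * n + 1) * Wallis.W n)⁻¹ := by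
  rw [Wallis.W_eq_factorial_ratio, two_mul_factorial_eq_mul_doubleFactorial, wallisRatio,
    Nat.doubleFactorial_two_mul]
  push_cast
  field_simp
  ring

theorem le_wallisRatio_sq (n : ℕ) : 2 / (π * (2 * n + 1)) ≤ wallisRatio n ^ 2 := by
  have hW := Wallis.W_pos n
  calc 2 / (π * (2 * n + 1)) = ((2 * n + 1) * (π / 2))⁻¹ := by field_simp
    _ ≤ ((2 * n + 1) * Wallis.W n)⁻¹ := by gcongr; exact Wallis.W_le n
    _ = wallisRatio n ^ 2 := (wallisRatio_sq_eq_inv n).symm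

theorem wallisRatio_sq_le (n : ℕ) : wallisRatio n ^ 2 ≤ 4 / (π * (2 * n + 1)) := by
  have le_W : π / 4 ≤ Wallis.W n := by
    calc π / 4 = 1 / 2 * (π / 2) := by ring
      _ ≤ (2 * n + 1) / (2 * n + 2) * (π / 2) := by
        gcongr ?_ * _
        rw [div_le_div_iff₀ (by norm_num) (by positivity)]
        linarith [n.cast_nonneg (α := ℝ)]
      _ ≤ Wallis.W n := Wallis.le_W n
  calc wallisRatio n ^ 2 = ((2 * n + 1) * Wallis.W n)⁻¹ := wallisRatio_sq_eq_inv n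
    _ ≤ ((2 * n + 1) * (π / 4))⁻¹ := by gcongr
    _ = 4 / (π * (2 * n + 1)) := by field_simp

end WallisRatio

section LegendreAtZero

open Polynomial
open scoped Nat

theorem eval_zero_iterate_derivative {R : Type*} [Semiring R] (p : R[X]) (n : ℕ) :
    (derivative^[n] p).eval 0 = n ! * p.coeff n := by
  rw [← coeff_zero_eq_eval_zero, coeff_iterate_derivative, zero_add, Nat.descFactorial_self,
    nsmul_eq_mul]

theorem coeff_two_mul_X_sq_sub_one_pow {R : Type*} [CommRing R] (l j : ℕ) :
    ((X ^ 2 - 1 : R[X]) ^ l).coeff (2 * j) = (-1) ^ (l - j) * l.choose j := by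
  have h_expand : (X ^ 2 - 1 : R[X]) ^ l = expand R 2 ((X + C (-1)) ^ l) := by
    simp [sub_eq_add_neg]
  rw [h_expand, coeff_expand_mul' two_pos, coeff_X_add_C_pow]

theorem eval_zero_iterate_derivative_legendreP (m k : ℕ) :
    (derivative^[m] (legendreP (m + 2 * k))).eval 0 =
      (-1) ^ k * ((2 * (m + k) - 1)‼ / (2 * k)‼ : ℝ) := by
  have h_choose : ((m + 2 * k).choose (m + k) : ℝ) = (m + 2 * k)! / ((m + k)! * k !) := by
    rw [Nat.cast_choose ℝ (by omega), show m + 2 * k - (m + k) = k by omega]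
  rw [legendreP, iterate_derivative_C_mul, ← Function.iterate_add_apply, eval_C_mul,
    eval_zero_iterate_derivative, show m + (m + 2 * k) = 2 * (m + k) by ring,
    coeff_two_mul_X_sq_sub_one_pow, show m + 2 * k - (m + k) = k by omega, h_choose,
    two_mul_factorial_eq_mul_doubleFactorial, Nat.doubleFactorial_two_mul,
    Nat.doubleFactorial_two_mul]
  push_cast
  field_simp
  ring

theorem assocLegendre_zero (m k : ℕ) :
    assocLegendre (m + 2 * k) m 0 =
      (-1) ^ (m + k) * ((2 * (m + k) - 1)‼ / (2 * k)‼ : ℝ) := by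
  rw [assocLegendre, eval_zero_iterate_derivative_legendreP, zero_pow two_ne_zero, sub_zero,
    one_rpow, mul_one, pow_add, mul_assoc]

end LegendreAtZero

section EquatorValue

open scoped Nat

theorem alphaY_natAbs_add_two_mul (m : ℤ) (k : ℕ) :
    alphaY (m.natAbs + 2 * k) m = (-1) ^ ((m + |m|) / 2) *
      √((2 * (m.natAbs + 2 * k) + 1) / (4 * π) * ((2 * k)! / (2 * (m.natAbs + k))!)) := by
  rw [alphaY, Nat.add_sub_cancel_left,
    show m.natAbs + 2 * k + m.natAbs = 2 * (m.natAbs + k) by ring, mul_div_mul_comm]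
  push_cast
  rfl

theorem factorial_ratio_mul_doubleFactorial_ratio_sq (k n : ℕ) :
    ((2 * k)! / (2 * n)! * ((2 * n - 1)‼ / (2 * k)‼) ^ 2 : ℝ) = wallisRatio k * wallisRatio n := by
  rw [wallisRatio, wallisRatio, two_mul_factorial_eq_mul_doubleFactorial,
    two_mul_factorial_eq_mul_doubleFactorial]
  push_cast
  field_simp

theorem neg_one_zpow_signs_mul_eq_one (m : ℤ) (k : ℕ) :
    (-1 : ℝ) ^ ((|m| - m) / 2 + (k : ℤ)) * (-1) ^ ((m + |m|) / 2) * (-1) ^ (m.natAbs + k) = 1 := by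
  have h_exponent : (|m| - m) / 2 + (k : ℤ) + (m + |m|) / 2 = (m.natAbs + k : ℕ) := by
    rw [Int.abs_eq_natAbs]
    omega
  rw [← zpow_add₀ (by norm_num), h_exponent, zpow_natCast, ← mul_pow]
  norm_num

theorem neg_one_zpow_mul_PzeroM (m : ℤ) (k : ℕ) :
    (-1 : ℝ) ^ ((|m| - m) / 2 + (k : ℤ)) * PzeroM m k =
      √((2 * (m.natAbs + 2 * k) + 1) / (4 * π) *
        (wallisRatio k * wallisRatio (m.natAbs + k))) := by
  rw [PzeroM, alphaY_natAbs_add_two_mul, assocLegendre_zero,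
    ← factorial_ratio_mul_doubleFactorial_ratio_sq, ← mul_assoc (_ / (4 * π)),
    sqrt_mul' _ (sq_nonneg _), sqrt_sq (by positivity)]
  linear_combination
    √((2 * (m.natAbs + 2 * k) + 1) / (4 * π) * ((2 * k)! / (2 * (m.natAbs + k))!)) *
      ((2 * (m.natAbs + k) - 1)‼ / (2 * k)‼) * neg_one_zpow_signs_mul_eq_one m k

end EquatorValue

section Bounds

theorem le_sq_mul_wallisRatio_mul (m k : ℕ) :
    (1 / (2 * π)) ^ 4 * ((m + 2 * k + 1) / (2 * k + 1)) ≤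
      ((2 * (m + 2 * k) + 1) / (4 * π) * (wallisRatio k * wallisRatio (m + k))) ^ 2 := by
  have h_wallis := le_wallisRatio_sq (m + k)
  push_cast at h_wallis
  calc (1 / (2 * π)) ^ 4 * ((m + 2 * k + 1) / (2 * k + 1) : ℝ)
      = ((m + 2 * k + 1) / (4 * π)) ^ 2 *
          (2 / (π * (2 * k + 1)) * (2 / (π * (4 * (m + 2 * k + 1))))) := by
        field_simp
        norm_num
    _ ≤ ((2 * (m + 2 * k) + 1) / (4 * π)) ^ 2 *
          (2 / (π * (2 * k + 1)) * (2 / (π * (2 * (m + k) + 1)))) := by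
        gcongr <;> linarith [m.cast_nonneg (α := ℝ), k.cast_nonneg (α := ℝ)]
    _ ≤ ((2 * (m + 2 * k) + 1) / (4 * π)) ^ 2 *
          (wallisRatio k ^ 2 * wallisRatio (m + k) ^ 2) := by
        gcongr
        exact le_wallisRatio_sq k
    _ = _ := by rw [mul_pow, mul_pow]

theorem sq_mul_wallisRatio_mul_le (m k : ℕ) :
    ((2 * (m + 2 * k) + 1) / (4 * π) * (wallisRatio k * wallisRatio (m + k))) ^ 2 ≤
      (2 / π) ^ 4 * ((m + 2 * k + 1) / (2 * k + 1)) := by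
  have h_wallis := wallisRatio_sq_le (m + k)
  push_cast at h_wallis
  calc ((2 * (m + 2 * k) + 1) / (4 * π) * (wallisRatio k * wallisRatio (m + k))) ^ 2
      = ((2 * (m + 2 * k) + 1) / (4 * π)) ^ 2 *
          (wallisRatio k ^ 2 * wallisRatio (m + k) ^ 2) := by rw [mul_pow, mul_pow]
    _ ≤ ((2 * (m + 2 * k) + 1) / (4 * π)) ^ 2 *
          (4 / (π * (2 * k + 1)) * (4 / (π * (2 * (m + k) + 1)))) := by
        gcongr
        exact wallisRatio_sq_le k
    _ ≤ (4 * (m + 2 * k + 1) / (4 * π)) ^ 2 *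
          (4 / (π * (2 * k + 1)) * (4 / (π * (m + 2 * k + 1)))) := by
        gcongr <;> linarith [m.cast_nonneg (α := ℝ), k.cast_nonneg (α := ℝ)]
    _ = (2 / π) ^ 4 * ((m + 2 * k + 1) / (2 * k + 1)) := by
        field_simp
        norm_num

theorem mul_rpow_one_fourth_pow_four (c : ℝ) {x : ℝ} (hx : 0 ≤ x) :
    (c * x ^ ((1 : ℝ) / 4)) ^ 4 = c ^ 4 * x := by
  rw [mul_pow, ← rpow_mul_natCast hx]
  norm_num

theorem sqrt_pow_four {x : ℝ} (hx : 0 ≤ x) : √x ^ 4 = x ^ 2 := by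
  rw [show 4 = 2 * 2 from rfl, pow_mul, sq_sqrt hx]

end Bounds

/-- estimate (3.4) of Lemma 3.1:
`c ((|m|+2k+1)/(2k+1))^{1/4} ≤ (-1)^{(|m|-m)/2+k} α_{|m|+2k}^m P_{|m|+2k}^{|m|}(0)
  ≤ C ((|m|+2k+1)/(2k+1))^{1/4}`. -/
theorem alpha_P_zero_bounds :
    ∃ c > 0, ∃ C > 0, ∀ (m : ℤ) (k : ℕ),
      c * (((m.natAbs : ℝ) + 2 * k + 1) / (2 * k + 1)) ^ ((1 : ℝ) / 4) ≤
        (-1 : ℝ) ^ ((|m| - m) / 2 + (k : ℤ)) * PzeroM m k ∧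
      (-1 : ℝ) ^ ((|m| - m) / 2 + (k : ℤ)) * PzeroM m k ≤
        C * (((m.natAbs : ℝ) + 2 * k + 1) / (2 * k + 1)) ^ ((1 : ℝ) / 4) := by
  refine ⟨1 / (2 * π), by positivity, 2 / π, by positivity, fun m k => ?_⟩
  have h_ratio : 0 ≤ ((m.natAbs : ℝ) + 2 * k + 1) / (2 * k + 1) := by positivity
  have h_value : 0 ≤ (2 * ((m.natAbs : ℝ) + 2 * k) + 1) / (4 * π) *
      (wallisRatio k * wallisRatio (m.natAbs + k)) := by unfold wallisRatio; positivity
  rw [neg_one_zpow_mul_PzeroM]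
  constructor <;> refine le_of_pow_le_pow_left₀ four_ne_zero (by positivity) ?_ <;>
    rw [mul_rpow_one_fourth_pow_four _ h_ratio, sqrt_pow_four h_value]
  · exact le_sq_mul_wallisRatio_mul m.natAbs k
  · exact sq_mul_wallisRatio_mul_le m.natAbs k

end
end

section
/- There are positive constants c and C such that for all integers m and all nonnegative integers k: c · ((|m|+1)/((2k+1)(|m|+2k+1)))^{1/4} ≤ (−3)^k Γ_k^m ≤ C · ((|m|+1)/((2k+1)(|m|+2k+1)))^{1/4}. -/
noncomputable section

open MeasureTheory Real Filter

/-!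
Write `n = |m|` and `W_k(s) = ∏_{i<k} (2(s+i)+1)/(2(s+i)+2)`. The square roots in `γ` disappear upon
squaring, the factors `(2l+3)/(2l-1)` telescope along `l = n+1, n+3, …`, and what remains is
`((-3)^k Γ_k^m)² = (2n+4k+1)/(2n+1) · W_k((n+1)/2)² · W_k(0) W_k(n)`.
The elementary bounds `(4s+1)/(4s+4k+1) ≤ W_k(s)² ≤ (2s+1)/(2s+2k+1)` show that the product of the
first two factors lies between `1` and `4`, while `(W_k(0) W_k(n))²` is comparable to
`(n+1)/((2k+1)(n+2k+1))`.
-/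

/-- The shifted Wallis product `∏_{i<k} (2(s+i)+1)/(2(s+i)+2)`, that is, the quotient of Pochhammer
symbols `(s+1/2)_k / (s+1)_k`. It is defined for real shifts because the possibly half-integral
shift `(|m|+1)/2` occurs alongside `0` and `|m|`. -/
def wallisProd (s : ℝ) (k : ℕ) : ℝ :=
  ∏ i ∈ Finset.range k, (2 * (s + i) + 1) / (2 * (s + i) + 2)

section WallisProd

variable {s : ℝ}

@[simp]
theorem wallisProd_zero_right : wallisProd s 0 = 1 :=
  Finset.prod_range_zero _

theorem wallisProd_succ (k : ℕ) :
    wallisProd s (k + 1) = wallisProd s k * ((2 * (s + k) + 1) / (2 * (s + k) + 2)) :=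
  Finset.prod_range_succ _ _

theorem wallisProd_sq_le (hs : -1 / 2 < s) (k : ℕ) :
    wallisProd s k ^ 2 ≤ (2 * s + 1) / (2 * s + 2 * k + 1) := by
  have hs₀ : 0 < 2 * s + 1 := by linarith
  induction k with
  | zero => simp [hs₀.ne']
  | succ k ih =>
    have hu : 0 < 2 * (s + k) + 1 := by linarith [k.cast_nonneg (α := ℝ)]
    have factor_le : ((2 * (s + k) + 1) / (2 * (s + k) + 2)) ^ 2 ≤
        (2 * (s + k) + 1) / (2 * (s + k) + 3) := by
      rw [div_pow, div_le_div_iff₀ (pow_pos (by linarith) 2) (by linarith)]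
      nlinarith
    calc wallisProd s (k + 1) ^ 2
        = wallisProd s k ^ 2 * ((2 * (s + k) + 1) / (2 * (s + k) + 2)) ^ 2 := by
          rw [wallisProd_succ, mul_pow]
      _ ≤ (2 * s + 1) / (2 * s + 2 * k + 1) * ((2 * (s + k) + 1) / (2 * (s + k) + 3)) := by
          gcongr
          exact div_nonneg hs₀.le (by linarith)
      _ = (2 * s + 1) / (2 * s + 2 * (k + 1 : ℕ) + 1) := by
          rw [show 2 * s + 2 * (k : ℝ) + 1 = 2 * (s + k) + 1 by ring, div_mul_div_cancel₀ hu.ne']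
          push_cast
          ring_nf

theorem le_wallisProd_sq (hs : -1 / 4 < s) (k : ℕ) :
    (4 * s + 1) / (4 * s + 4 * k + 1) ≤ wallisProd s k ^ 2 := by
  have hs₀ : 0 < 4 * s + 1 := by linarith
  induction k with
  | zero => simp [hs₀.ne']
  | succ k ih =>
    have hu : 0 < 4 * (s + k) + 1 := by linarith [k.cast_nonneg (α := ℝ)]
    have le_factor : (4 * (s + k) + 1) / (4 * (s + k) + 5) ≤
        ((2 * (s + k) + 1) / (2 * (s + k) + 2)) ^ 2 := by
      rw [div_pow, div_le_div_iff₀ (by linarith) (pow_pos (by linarith) 2)]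
      -- After cross-multiplication the two sides differ by exactly `1`.
      nlinarith
    calc (4 * s + 1) / (4 * s + 4 * (k + 1 : ℕ) + 1)
        = (4 * s + 1) / (4 * s + 4 * k + 1) * ((4 * (s + k) + 1) / (4 * (s + k) + 5)) := by
          rw [show 4 * s + 4 * (k : ℝ) + 1 = 4 * (s + k) + 1 by ring, div_mul_div_cancel₀ hu.ne']
          push_cast
          ring_nf
      _ ≤ wallisProd s k ^ 2 * ((2 * (s + k) + 1) / (2 * (s + k) + 2)) ^ 2 := by
          gcongr
          exact div_nonneg hu.le (by linarith)
      _ = wallisProd s (k + 1) ^ 2 := by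
          rw [wallisProd_succ, mul_pow]

theorem wallisProd_zero_mul_sq_le (hs : 0 ≤ s) (k : ℕ) :
    (wallisProd 0 k * wallisProd s k) ^ 2 ≤
      2 * ((s + 1) / ((2 * k + 1) * (s + 2 * k + 1))) := by
  have h₀ : wallisProd 0 k ^ 2 ≤ 1 / (2 * k + 1) := by
    simpa using wallisProd_sq_le (s := 0) (by norm_num) k
  have h₁ : (2 * s + 1) / (2 * s + 2 * k + 1) ≤ 2 * (s + 1) / (s + 2 * k + 1) := by
    gcongr <;> linarith
  calc (wallisProd 0 k * wallisProd s k) ^ 2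
      = wallisProd 0 k ^ 2 * wallisProd s k ^ 2 := mul_pow ..
    _ ≤ 1 / (2 * k + 1) * (2 * (s + 1) / (s + 2 * k + 1)) := by
        gcongr
        exact (wallisProd_sq_le (by linarith) k).trans h₁
    _ = 2 * ((s + 1) / ((2 * k + 1) * (s + 2 * k + 1))) := by
        field_simp

theorem le_wallisProd_zero_mul_sq (hs : 0 ≤ s) (k : ℕ) :
    1 / 8 * ((s + 1) / ((2 * k + 1) * (s + 2 * k + 1))) ≤
      (wallisProd 0 k * wallisProd s k) ^ 2 := by
  have h₀ : 1 / (2 * (2 * k + 1)) ≤ wallisProd 0 k ^ 2 :=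
    calc (1 : ℝ) / (2 * (2 * k + 1)) ≤ 1 / (4 * k + 1) := by gcongr; linarith
      _ ≤ wallisProd 0 k ^ 2 := by simpa using le_wallisProd_sq (s := 0) (by norm_num) k
  have h₁ : (s + 1) / (4 * (s + 2 * k + 1)) ≤ (4 * s + 1) / (4 * s + 4 * k + 1) := by
    rw [div_le_div_iff₀ (by positivity) (by positivity)]
    nlinarith [mul_nonneg hs k.cast_nonneg]
  calc 1 / 8 * ((s + 1) / ((2 * k + 1) * (s + 2 * k + 1)))
      = 1 / (2 * (2 * k + 1)) * ((s + 1) / (4 * (s + 2 * k + 1))) := by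
        field_simp
        norm_num
    _ ≤ wallisProd 0 k ^ 2 * wallisProd s k ^ 2 := by
        gcongr
        exact h₁.trans (le_wallisProd_sq (by linarith) k)
    _ = (wallisProd 0 k * wallisProd s k) ^ 2 := (mul_pow ..).symm

theorem div_mul_wallisProd_sq_le_four {n : ℝ} (hn : 0 ≤ n) (k : ℕ) :
    (2 * n + 4 * k + 1) / (2 * n + 1) * wallisProd ((n + 1) / 2) k ^ 2 ≤ 4 := by
  calc (2 * n + 4 * k + 1) / (2 * n + 1) * wallisProd ((n + 1) / 2) k ^ 2
      ≤ (2 * n + 4 * k + 1) / (2 * n + 1) *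
          ((2 * ((n + 1) / 2) + 1) / (2 * ((n + 1) / 2) + 2 * k + 1)) := by
        gcongr
        exact wallisProd_sq_le (by linarith) k
    _ ≤ 4 := by
        rw [div_mul_div_comm, div_le_iff₀ (by positivity)]
        nlinarith [mul_nonneg hn k.cast_nonneg]

theorem one_le_div_mul_wallisProd_sq {n : ℝ} (hn : -1 / 2 < n) (k : ℕ) :
    1 ≤ (2 * n + 4 * k + 1) / (2 * n + 1) * wallisProd ((n + 1) / 2) k ^ 2 := by
  have : (0 : ℝ) ≤ k := k.cast_nonneg
  have hn₀ : 0 < 2 * n + 1 := by linarith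
  calc 1 ≤ (2 * n + 4 * k + 1) / (2 * n + 1) *
          ((4 * ((n + 1) / 2) + 1) / (4 * ((n + 1) / 2) + 4 * k + 1)) := by
        rw [div_mul_div_comm, le_div_iff₀ (mul_pos hn₀ (by linarith))]
        nlinarith
    _ ≤ (2 * n + 4 * k + 1) / (2 * n + 1) * wallisProd ((n + 1) / 2) k ^ 2 := by
        gcongr
        · exact div_nonneg (by linarith) hn₀.le
        · exact le_wallisProd_sq (by linarith) k

end WallisProd

theorem betaLM_nonneg (l : ℕ) (m : ℤ) : 0 ≤ betaLM l m :=
  Real.sqrt_nonneg _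

theorem betaLM_sq {l : ℕ} {m : ℤ} (h : m.natAbs ≤ l) :
    betaLM l m ^ 2 =
      ((l : ℝ) - m.natAbs) * (l + m.natAbs) / ((2 * l - 1) * (2 * l + 1)) := by
  refine Real.sq_sqrt ?_
  rcases l.eq_zero_or_pos with rfl | hl
  · simp [Nat.le_zero.mp h]
  · have hm : (m.natAbs : ℝ) ≤ l := mod_cast h
    have hl' : (1 : ℝ) ≤ l := mod_cast hl
    exact div_nonneg (mul_nonneg (by linarith) (by positivity))
      (mul_nonneg (by linarith) (by positivity))

theorem gammaLM_nonpos (l : ℕ) (m : ℤ) : gammaLM l m ≤ 0 := by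
  have := betaLM_nonneg l m
  have := betaLM_nonneg (l + 1) m
  rw [gammaLM, neg_div]
  exact neg_nonpos.mpr (by positivity)

theorem neg_three_mul_gammaLM_sq {l : ℕ} {m : ℤ} (h : m.natAbs ≤ l) :
    (-3 * gammaLM l m) ^ 2 =
      ((l + 1) / (l + 2)) ^ 2 * ((2 * l + 3) / (2 * l - 1)) *
        (((l : ℝ) - m.natAbs) / (l + 1 - m.natAbs)) *
        ((l + m.natAbs) / (l + 1 + m.natAbs)) := by
  have hm : (m.natAbs : ℝ) ≤ l := mod_cast h
  have hsub : (l : ℝ) + 1 - m.natAbs ≠ 0 := by linarith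
  calc (-3 * gammaLM l m) ^ 2
      = ((l + 1) / (l + 2)) ^ 2 * (betaLM l m ^ 2 / betaLM (l + 1) m ^ 2) := by
        rw [gammaLM]
        field_simp
    _ = _ := by
        rw [betaLM_sq h, betaLM_sq (h.trans l.le_succ)]
        push_cast
        rw [show 2 * ((l : ℝ) + 1) - 1 = 2 * l + 1 by ring,
          show 2 * ((l : ℝ) + 1) + 1 = 2 * l + 3 by ring]
        field_simp

theorem neg_three_pow_mul_GammaKM (m : ℤ) (k : ℕ) :
    (-3 : ℝ) ^ k * GammaKM m k =
      ∏ i ∈ Finset.range k, -3 * gammaLM (m.natAbs + 2 * i + 1) m := by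
  induction k with
  | zero => simp [GammaKM]
  | succ k ih =>
    rw [Finset.prod_range_succ, ← ih, GammaKM, GammaKM, Finset.prod_Icc_succ_top (by omega),
      show m.natAbs + 2 * (k + 1) - 1 = m.natAbs + 2 * k + 1 by omega]
    ring

theorem neg_three_pow_mul_GammaKM_nonneg (m : ℤ) (k : ℕ) : 0 ≤ (-3 : ℝ) ^ k * GammaKM m k := by
  rw [neg_three_pow_mul_GammaKM]
  exact Finset.prod_nonneg fun i _ =>
    mul_nonneg_of_nonpos_of_nonpos (by norm_num) (gammaLM_nonpos _ m)

theorem neg_three_pow_mul_GammaKM_sq (m : ℤ) (k : ℕ) :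
    ((-3 : ℝ) ^ k * GammaKM m k) ^ 2 =
      (2 * m.natAbs + 4 * k + 1) / (2 * m.natAbs + 1) * wallisProd ((m.natAbs + 1) / 2) k ^ 2 *
        (wallisProd 0 k * wallisProd m.natAbs k) := by
  rw [neg_three_pow_mul_GammaKM]
  induction k with
  | zero =>
    have : 2 * (m.natAbs : ℝ) + 1 ≠ 0 := by positivity
    simp [-Nat.cast_natAbs, this]
  | succ k ih =>
    have factor_sq : (-3 * gammaLM (m.natAbs + 2 * k + 1) m) ^ 2 =
        (2 * m.natAbs + 4 * (k + 1 : ℕ) + 1) / (2 * m.natAbs + 4 * k + 1) *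
          ((2 * ((m.natAbs + 1) / 2 + k) + 1) / (2 * ((m.natAbs + 1) / 2 + k) + 2)) ^ 2 *
          ((2 * (0 + k) + 1) / (2 * (0 + k) + 2) *
            ((2 * (m.natAbs + k) + 1) / (2 * (m.natAbs + k) + 2))) := by
      rw [neg_three_mul_gammaLM_sq (by omega)]
      push_cast
      ring_nf
    rw [Finset.prod_range_succ, mul_pow, ih, factor_sq]
    simp only [wallisProd_succ]
    field_simp

theorem neg_three_pow_mul_GammaKM_pow_four_le (m : ℤ) (k : ℕ) :
    ((-3 : ℝ) ^ k * GammaKM m k) ^ 4 ≤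
      32 * (((m.natAbs : ℝ) + 1) / ((2 * k + 1) * ((m.natAbs : ℝ) + 2 * k + 1))) := by
  have hn : (0 : ℝ) ≤ m.natAbs := Nat.cast_nonneg _
  rw [show 4 = 2 * 2 from rfl, pow_mul, neg_three_pow_mul_GammaKM_sq, mul_pow]
  calc _ ≤ (4 : ℝ) ^ 2 *
        (2 * (((m.natAbs : ℝ) + 1) / ((2 * k + 1) * ((m.natAbs : ℝ) + 2 * k + 1)))) := by
        gcongr
        · exact div_mul_wallisProd_sq_le_four hn k
        · exact wallisProd_zero_mul_sq_le hn k
    _ = _ := by ring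

theorem le_neg_three_pow_mul_GammaKM_pow_four (m : ℤ) (k : ℕ) :
    1 / 8 * (((m.natAbs : ℝ) + 1) / ((2 * k + 1) * ((m.natAbs : ℝ) + 2 * k + 1))) ≤
      ((-3 : ℝ) ^ k * GammaKM m k) ^ 4 := by
  have hn : (0 : ℝ) ≤ m.natAbs := Nat.cast_nonneg _
  rw [show 4 = 2 * 2 from rfl, pow_mul, neg_three_pow_mul_GammaKM_sq, mul_pow]
  exact (le_wallisProd_zero_mul_sq hn k).trans <|
    le_mul_of_one_le_left (sq_nonneg _) (one_le_pow₀ (one_le_div_mul_wallisProd_sq (by linarith) k))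

/-- estimate (3.5) of Lemma 3.1:
`c ((|m|+1)/((2k+1)(|m|+2k+1)))^{1/4} ≤ (-3)^k Γ_k^m
  ≤ C ((|m|+1)/((2k+1)(|m|+2k+1)))^{1/4}`. -/
theorem Gamma_bounds :
    ∃ c > 0, ∃ C > 0, ∀ (m : ℤ) (k : ℕ),
      c * (((m.natAbs : ℝ) + 1) / ((2 * k + 1) * ((m.natAbs : ℝ) + 2 * k + 1))) ^
          ((1 : ℝ) / 4) ≤ (-3 : ℝ) ^ k * GammaKM m k ∧
      (-3 : ℝ) ^ k * GammaKM m k ≤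
        C * (((m.natAbs : ℝ) + 1) / ((2 * k + 1) * ((m.natAbs : ℝ) + 2 * k + 1))) ^
          ((1 : ℝ) / 4) := by
  refine ⟨1 / 2, by norm_num, 3, by norm_num, fun m k => ?_⟩
  have G_nonneg := neg_three_pow_mul_GammaKM_nonneg m k
  have G_le := neg_three_pow_mul_GammaKM_pow_four_le m k
  have le_G := le_neg_three_pow_mul_GammaKM_pow_four m k
  set X : ℝ := ((m.natAbs : ℝ) + 1) / ((2 * k + 1) * ((m.natAbs : ℝ) + 2 * k + 1))
  have hX : 0 ≤ X := by positivity
  have root_pow : (X ^ ((1 : ℝ) / 4)) ^ 4 = X := by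
    simpa using Real.rpow_inv_natCast_pow hX (n := 4) (by norm_num)
  constructor
  · refine le_of_pow_le_pow_left₀ (n := 4) (by norm_num) G_nonneg ?_
    rw [mul_pow, root_pow]
    linarith
  · refine le_of_pow_le_pow_left₀ (n := 4) (by norm_num) (by positivity) ?_
    rw [mul_pow 3, root_pow]
    linarith

end
end
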